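/- arXiv:1405.4037 — 3 statements merged into one kernel-verified Lean document; each statement's English description precedes it below -/
import Mathlib

section
/- Let k be a field of characteristic 0, K/k a field extension, G a finite group, and ρ : G → GL_n(K) a K-irreducible representation. Then ρ descends to an intermediate field k ⊆ K₀ ⊆ K whose transcendence degree over k is at most n²/4; that is, there exists an intermediate field K₀ with 4·trdeg_k(K₀) ≤ n² and a representation ρ' : G → GL_n(K₀) whose base change to K is K-equivalent to ρ. -/
open Matrix

/-- A matrix representation is irreducible (over the base field) if it is nonzero and the
only invariant subspaces are `⊥` and `⊤`. -/
def IsIrreducibleRep {K : Type*} [Field K] {G : Type*} [Group G] {n : ℕ}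
    (ρ : G →* GL (Fin n) K) : Prop :=
  0 < n ∧ ∀ W : Submodule K (Fin n → K),
    (∀ g : G, ∀ v ∈ W, (ρ g : Matrix (Fin n) (Fin n) K).mulVec v ∈ W) → W = ⊥ ∨ W = ⊤

/-- A representation `ρ : G → GL_n(K)` descends to an intermediate field `K₀` of `K/k` if
it is `K`-equivalent (conjugate) to the base change of some representation over `K₀`. -/
def Descends {k K : Type*} [Field k] [Field K] [Algebra k K] {G : Type*} [Group G] {n : ℕ}
    (ρ : G →* GL (Fin n) K) (K₀ : IntermediateField k K) : Prop :=
  ∃ ρ' : G →* GL (Fin n) K₀, ∃ M : GL (Fin n) K,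
    ∀ g, ρ g = M * Units.map ((algebraMap K₀ K).mapMatrix).toMonoidHom (ρ' g) * M⁻¹

/-- The transcendence degree of `K₀` over `k` is at most `n²/4`: every algebraically
independent (over `k`) finite subset `s` of `K₀` satisfies `4 * #s ≤ n²`. -/
def FourTrdegLE {k K : Type*} [Field k] [Field K] [Algebra k K]
    (K₀ : IntermediateField k K) (N : ℕ) : Prop :=
  ∀ s : Finset K₀,
    AlgebraicIndependent k (fun x : {y : K₀ // y ∈ s} => (x : K₀)) → 4 * s.card ≤ N

/-!
Over a field `C` containing an algebraically closed subfield `F`, Wedderburn's theorem turns a left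
ideal of `C[G]` into a family of row spaces `Wᵢ ⊆ C ^ dᵢ`. The reduced echelon form of `Wᵢ` has at
most `wᵢ (dᵢ - wᵢ)` entries other than `0` and `1`, where `wᵢ = dim Wᵢ`, so the ideal is defined
over any field containing `F` and certain `∑ wᵢ (dᵢ - wᵢ) ≤ (∑ dᵢ wᵢ)² / 4` further elements, where
`∑ dᵢ wᵢ` is the dimension of the ideal.

For `K ⊆ C` and a left ideal `I` of `K[G]`, suppose that the left ideal of `C[G]` generated by `I`
is defined over `L ⊆ C`. Then the reduced echelon basis of `I` has coordinates in `L`, and `G` acts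
on `I` in this basis through matrices with entries in `L ∩ K`. By Maschke's theorem every
representation over `K` is a direct sum of left ideals, and the sum of the squares of their
dimensions is at most `n²`. Take for `F` the algebraic closure of `k`, and for `K₀` the elements of
`K` that are algebraic over `k(S)`, where `S` consists of the further elements for all these ideals.
-/

open Module
open scoped MonoidAlgebra

section FieldOfDefinition

variable {ι ι' F E E' : Type*} [Field F] [AddCommGroup E'] [Module F E'] [AddCommGroup E]
  [Module F E]

/-- The subspace `W` has the subfield `L` as a field of definition, with respect to the coordinates
given by the basis `e`: it is spanned by vectors whose coordinates lie in `L`. -/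
def IsDefinedOver (e : Basis ι F E) (L : Subfield F) (W : Submodule F E) : Prop :=
  W ≤ Submodule.span F {t | t ∈ W ∧ ∀ i, e.repr t i ∈ L}

namespace IsDefinedOver

theorem of_basis {κ : Type*} {e : Basis ι F E} {L : Subfield F} {W : Submodule F E}
    (b : Basis κ F W) (hb : ∀ c i, e.repr (b c : E) i ∈ L) : IsDefinedOver e L W := by
  intro w hw
  rw [show w = W.subtype ⟨w, hw⟩ from rfl, ← b.linearCombination_repr ⟨w, hw⟩,
    Finsupp.linearCombination_apply, Finsupp.sum, map_sum]
  exact Submodule.sum_mem _ fun c _ ↦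
    Submodule.smul_mem _ _ (Submodule.subset_span ⟨(b c).2, hb c⟩)

theorem iSup {κ : Type*} {e : Basis ι F E} {L : Subfield F} {W : κ → Submodule F E}
    (hW : ∀ c, IsDefinedOver e L (W c)) : IsDefinedOver e L (⨆ c, W c) :=
  iSup_le fun c ↦ (hW c).trans <|
    Submodule.span_mono fun _ ht ↦ ⟨le_iSup W c ht.1, ht.2⟩

theorem map {e : Basis ι F E} {e' : Basis ι' F E'} {L : Subfield F} {W : Submodule F E}
    (hW : IsDefinedOver e L W) (f : E →ₗ[F] E') (hf : ∀ j i, e'.repr (f (e j)) i ∈ L) :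
    IsDefinedOver e' L (W.map f) := by
  refine (Submodule.map_mono hW).trans ?_
  rw [Submodule.map_span]
  refine Submodule.span_mono ?_
  rintro _ ⟨t, ⟨htW, htL⟩, rfl⟩
  refine ⟨Submodule.mem_map_of_mem htW, fun i ↦ ?_⟩
  rw [← e.linearCombination_repr t, Finsupp.linearCombination_apply, Finsupp.sum]
  simp only [map_sum, map_smul, Finsupp.finsetSum_apply, Finsupp.smul_apply, smul_eq_mul]
  exact L.sum_mem fun j _ ↦ L.mul_mem (htL j) (hf j i)

/-- Applying an `L`-linear retraction `F → L` to all coordinates preserves `W`. The vector so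
obtained from `w` agrees with `w` in the coordinates `s`, hence equals `w`. -/
theorem repr_mem {e : Basis ι F E} {L : Subfield F} {W : Submodule F E}
    (hW : IsDefinedOver e L W) {s : Set ι}
    (hs : ∀ w ∈ W, (∀ c ∈ s, e.repr w c = 0) → w = 0)
    {w : E} (hw : w ∈ W) (hwL : ∀ c ∈ s, e.repr w c ∈ L) (i : ι) : e.repr w i ∈ L := by
  obtain ⟨π, hπ⟩ := (Algebra.linearMap L F).exists_leftInverse_of_injective
    (LinearMap.ker_eq_bot.2 (algebraMap L F).injective)
  have π_apply (x : L) : π (x : F) = x := LinearMap.congr_fun hπ x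
  let p (v : E) : E := e.repr.symm ((e.repr v).mapRange (fun x ↦ (π x : F)) (by simp))
  have repr_p (v : E) (i : ι) : e.repr (p v) i = π (e.repr v i) := by simp [p]
  have p_mem {v : E} (hv : v ∈ Submodule.span F {t | t ∈ W ∧ ∀ i, e.repr t i ∈ L}) (x : F) :
      p (x • v) ∈ W := by
    induction hv using Submodule.span_induction generalizing x with
    | mem t ht =>
      have : p (x • t) = (π x : F) • t := e.ext_elem fun i ↦ by
        have : x * e.repr t i = (⟨e.repr t i, ht.2 i⟩ : L) • x := mul_comm _ _
        simp [repr_p, this, mul_comm]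
      exact this ▸ W.smul_mem _ ht.1
    | zero =>
      have : p (x • (0 : E)) = 0 := e.ext_elem fun i ↦ by simp [repr_p]
      rw [this]
      exact W.zero_mem
    | add u v _ _ hu hv =>
      have : p (x • (u + v)) = p (x • u) + p (x • v) := e.ext_elem fun i ↦ by
        simp [repr_p]
      exact this ▸ W.add_mem (hu x) (hv x)
    | smul y v _ hv => exact smul_smul x y v ▸ hv (x * y)
  have pw_mem : p w ∈ W := by simpa using p_mem (hW hw) 1
  have p_eq : p w = w := sub_eq_zero.1 <| hs _ (W.sub_mem pw_mem hw) fun c hc ↦ by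
    simp [repr_p, π_apply ⟨_, hwL c hc⟩]
  rw [← p_eq, repr_p]
  exact (π (e.repr w i)).2

end IsDefinedOver

/-- The reduced echelon basis of a subspace: `s` is the set of pivots. -/
theorem exists_basis_repr_eq_repr [Finite ι] (e : Basis ι F E) (W : Submodule F E) :
    ∃ (s : Set ι) (b : Basis s F W), ∀ w c, b.repr w c = e.repr (w : E) c := by
  have := Fintype.ofFinite ι
  have := Module.Finite.of_basis e
  let coord (i : ι) : Dual F W := e.coord i ∘ₗ W.subtype
  obtain ⟨s, -, -, hspan, hs⟩ :=
    exists_linearIndepOn_extension (linearIndepOn_empty F coord) (Set.empty_subset Set.univ)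
  have := Fintype.ofFinite s
  let f : W →ₗ[F] s → F := LinearMap.pi fun c ↦ coord c
  have f_injective : Function.Injective f := by
    rw [injective_iff_map_eq_zero]
    intro w hw
    have : Submodule.span F (coord '' s) ≤ LinearMap.ker (Dual.eval F W w) := by
      rw [Submodule.span_le]
      rintro _ ⟨c, hc, rfl⟩
      exact congrFun hw ⟨c, hc⟩
    exact Subtype.ext <| e.ext_elem fun i ↦ by
      simpa [coord] using this (hspan ⟨i, Set.mem_univ i, rfl⟩)
  have finrank_eq : finrank F W = finrank F (s → F) := by
    apply le_antisymm (LinearMap.finrank_le_finrank_of_injective f_injective)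
    rw [finrank_pi, ← Subspace.dual_finrank_eq]
    exact hs.fintype_card_le_finrank
  exact ⟨s, .ofEquivFun (.ofInjectiveOfFinrankEq f f_injective finrank_eq), fun w c ↦ rfl⟩

theorem exists_finset_forall_isDefinedOver [Fintype ι] (e : Basis ι F E) (W : Submodule F E) :
    ∃ S : Finset F, S.card ≤ finrank F W * (Fintype.card ι - finrank F W) ∧
      ∀ L : Subfield F, (S : Set F) ⊆ L → IsDefinedOver e L W := by
  classical
  obtain ⟨s, b, hb⟩ := exists_basis_repr_eq_repr e W
  refine ⟨(Finset.univ : Finset (s × (sᶜ : Set ι))).image fun p ↦ e.repr (b p.1 : E) p.2, ?_, ?_⟩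
  · refine Finset.card_image_le.trans_eq ?_
    rw [Finset.card_univ, Fintype.card_prod, Fintype.card_compl_set, finrank_eq_card_basis b]
  · refine fun L hL ↦ .of_basis b fun c i ↦ ?_
    by_cases hi : i ∈ s
    · rw [← hb (b c) ⟨i, hi⟩, b.repr_self, Finsupp.single_apply]
      split_ifs
      exacts [L.one_mem, L.zero_mem]
    · exact hL <| Finset.mem_coe.2 <| Finset.mem_image.2 ⟨(c, ⟨i, hi⟩), Finset.mem_univ _, rfl⟩

theorem eq_sum_repr_smul_of_mem_span_image {K : Type*} [Field K] [Algebra K F] [Module K E']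
    [IsScalarTower K F E'] {V : Type*} [AddCommGroup V] [Module K V]
    {e : Basis ι K V} {e' : Basis ι F E'} {f : V →ₗ[K] E'}
    (hf : ∀ v i, e'.repr (f v) i = algebraMap K F (e.repr v i))
    {W : Submodule K V} {s : Set ι} [Fintype s] {b : Basis s K W}
    (hb : ∀ w c, b.repr w c = e.repr (w : V) c) {x : E'} (hx : x ∈ Submodule.span F (f '' W)) :
    x = ∑ c : s, e'.repr x c • f (b c) := by
  induction hx using Submodule.span_induction with
  | mem x hx =>
    obtain ⟨w, hw, rfl⟩ := hx
    conv_lhs => rw [show w = W.subtype ⟨w, hw⟩ from rfl, ← b.sum_repr (Subtype.mk w hw)]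
    simp [hf, hb]
  | zero => simp
  | add x y _ _ hx hy =>
    conv_lhs => rw [hx, hy]
    simp [add_smul, Finset.sum_add_distrib]
  | smul a x _ hx =>
    conv_lhs => rw [hx]
    simp [Finset.smul_sum, mul_smul]

theorem IsDefinedOver.algebraMap_repr_mem {K : Type*} [Field K] [Algebra K F] [Module K E']
    [IsScalarTower K F E'] {V : Type*} [AddCommGroup V] [Module K V]
    {e : Basis ι K V} {e' : Basis ι F E'} {f : V →ₗ[K] E'}
    (hf : ∀ v i, e'.repr (f v) i = algebraMap K F (e.repr v i))
    {W : Submodule K V} {s : Set ι} [Finite s] {b : Basis s K W}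
    (hb : ∀ w c, b.repr w c = e.repr (w : V) c) {L : Subfield F}
    (hL : IsDefinedOver e' L (Submodule.span F (f '' W))) (c : s) (i : ι) :
    algebraMap K F (e.repr (b c : V) i) ∈ L := by
  classical
  have := Fintype.ofFinite s
  rw [← hf]
  refine hL.repr_mem (s := s) (fun w hw hw0 ↦ ?_)
    (Submodule.subset_span (Set.mem_image_of_mem f (b c).2)) (fun c' hc' ↦ ?_) i
  · rw [eq_sum_repr_smul_of_mem_span_image hf hb hw]
    exact Finset.sum_eq_zero fun c' _ ↦ by rw [hw0 c' c'.2, zero_smul]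
  · rw [hf, ← hb (b c) ⟨c', hc'⟩, b.repr_self, Finsupp.single_apply]
    split_ifs <;> simp

theorem finrank_span_image_le {K : Type*} [Field K] [Algebra K F] [Module K E']
    [IsScalarTower K F E'] {V : Type*} [AddCommGroup V] [Module K V] (f : V →ₗ[K] E')
    (W : Submodule K V) [FiniteDimensional K W] :
    finrank F (Submodule.span F (f '' W)) ≤ finrank K W := by
  let b := finBasis K W
  have map_eq : W.map f = Submodule.span K (Set.range fun i ↦ f (b i)) := by
    rw [show (fun i ↦ f (b i)) = (f ∘ₗ W.subtype) ∘ b from rfl, Set.range_comp,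
      Submodule.span_image, b.span_eq, Submodule.map_comp, Submodule.map_subtype_top]
  rw [← Submodule.map_coe, map_eq, Submodule.span_span_of_tower]
  exact (finrank_range_le_card fun i ↦ f (b i)).trans_eq (Fintype.card_fin _)

end FieldOfDefinition

section PiMatrix

variable {ι R : Type*} {n : ι → Type*} [DecidableEq ι] [∀ i, DecidableEq (n i)]

section Semiring

variable [Semiring R]

/-- The element of `∏ i, M_{n i}(R)` whose only nonzero row is the row `a` of the block `i`, as a
function of that row. -/
def rowSingle (i : ι) (a : n i) : (n i → R) →ₗ[R] ∀ i, Matrix (n i) (n i) R :=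
  LinearMap.single R (fun i ↦ Matrix (n i) (n i) R) i ∘ₗ
    (ofLinearEquiv R).toLinearMap ∘ₗ LinearMap.single R (fun _ ↦ n i → R) a

theorem rowSingle_single (i : ι) (a b : n i) (x : R) :
    rowSingle i a (Pi.single b x) = Pi.single i (single a b x) := by
  simp only [rowSingle, LinearMap.comp_apply, LinearMap.single_apply, LinearEquiv.coe_coe,
    coe_ofLinearEquiv]
  ext j p q
  by_cases hj : j = i
  · subst hj
    by_cases hp : p = a
    · subst hp
      simp [single_apply, Pi.single_apply, eq_comm]
    · simp [hp, Ne.symm hp]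
  · simp [hj]

theorem single_single_mul [∀ i, Fintype (n i)] (i : ι) (a b : n i)
    (A : ∀ i, Matrix (n i) (n i) R) :
    Pi.single i (single a b 1) * A = rowSingle i a (A i b) := by
  ext j p q
  by_cases hj : j = i
  · subst hj
    by_cases hp : p = a
    · subst hp
      simp [rowSingle]
    · simp [rowSingle, hp]
  · simp [rowSingle, hj]

theorem sum_rowSingle [Fintype ι] [∀ i, Fintype (n i)] (A : ∀ i, Matrix (n i) (n i) R) :
    ∑ i, ∑ a, rowSingle i a (A i a) = A := by
  conv_rhs => rw [← Finset.univ_sum_single A]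
  refine Finset.sum_congr rfl fun i _ ↦ ?_
  simp only [rowSingle, LinearMap.comp_apply, ← map_sum]
  exact congrArg (LinearMap.single R (fun i ↦ Matrix (n i) (n i) R) i ∘ of)
    (Finset.univ_sum_single (A i))

theorem eq_top_of_single_single_mem [Finite ι] [∀ i, Finite (n i)]
    {N : Submodule R (∀ i, Matrix (n i) (n i) R)}
    (hN : ∀ i a b, (Pi.single i (single a b 1) : ∀ i, Matrix (n i) (n i) R) ∈ N) : N = ⊤ := by
  have := Fintype.ofFinite ι
  have fintype_n (i : ι) : Fintype (n i) := .ofFinite _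
  refine eq_top_iff.2 fun A _ ↦ ?_
  rw [← sum_rowSingle A]
  refine sum_mem fun i _ ↦ sum_mem fun a _ ↦ ?_
  rw [pi_eq_sum_univ' (A i a), map_sum]
  refine sum_mem fun b _ ↦ ?_
  rw [map_smul]
  refine N.smul_mem _ ?_
  have := hN i a b
  rw [← rowSingle_single] at this
  convert this using 2

end Semiring

section Ideal

variable [CommSemiring R] [∀ i, Fintype (n i)]

/-- A left ideal of `∏ i, M_{n i}(R)` consists of the families of matrices with all rows of the
`i`-th matrix in a fixed submodule of `R ^ n i`, the `i`-th row space of the ideal. -/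
def rowSpace (J : Ideal (∀ i, Matrix (n i) (n i) R)) (i : ι) : Submodule R (n i → R) :=
  ⨅ a, (J.restrictScalars R).comap (rowSingle i a)

theorem mem_rowSpace {J : Ideal (∀ i, Matrix (n i) (n i) R)} {i : ι} {t : n i → R} :
    t ∈ rowSpace J i ↔ ∀ a, rowSingle i a t ∈ J := by
  simp [rowSpace]

variable [Finite ι]

theorem mem_iff_forall_mem_rowSpace {J : Ideal (∀ i, Matrix (n i) (n i) R)}
    {A : ∀ i, Matrix (n i) (n i) R} : A ∈ J ↔ ∀ i a, A i a ∈ rowSpace J i where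
  mp hA i b := mem_rowSpace.2 fun a ↦ by
    rw [← single_single_mul]
    exact J.mul_mem_left _ hA
  mpr hA := by
    have := Fintype.ofFinite ι
    rw [← sum_rowSingle A]
    exact J.sum_mem fun i _ ↦ J.sum_mem fun a _ ↦ mem_rowSpace.1 (hA i a) a

theorem restrictScalars_eq_iSup_map_rowSpace (J : Ideal (∀ i, Matrix (n i) (n i) R)) :
    J.restrictScalars R = ⨆ i, ⨆ a, (rowSpace J i).map (rowSingle i a) := by
  have := Fintype.ofFinite ι
  apply le_antisymm
  · intro A hA
    rw [← sum_rowSingle A]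
    exact sum_mem fun i _ ↦ sum_mem fun a _ ↦ Submodule.mem_iSup_of_mem i <|
      Submodule.mem_iSup_of_mem a <|
        Submodule.mem_map_of_mem (mem_iff_forall_mem_rowSpace.1 hA i a)
  · refine iSup₂_le fun i a ↦ ?_
    rintro _ ⟨t, ht, rfl⟩
    exact mem_rowSpace.1 ht a

/-- A left ideal of `∏ i, M_{n i}(R)` as the module of families of rows in its row spaces. -/
def piRowSpaceEquiv (J : Ideal (∀ i, Matrix (n i) (n i) R)) :
    (∀ i, n i → rowSpace J i) ≃ₗ[R] J.restrictScalars R where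
  toFun x := ⟨fun i ↦ of fun a ↦ (x i a : n i → R),
    mem_iff_forall_mem_rowSpace.2 fun i a ↦ (x i a).2⟩
  invFun A i a := ⟨A.1 i a, mem_iff_forall_mem_rowSpace.1 A.2 i a⟩
  map_add' _ _ := rfl
  map_smul' _ _ := rfl
  left_inv _ := rfl
  right_inv _ := rfl

end Ideal

theorem sum_card_mul_finrank_rowSpace [Field R] [Fintype ι] [∀ i, Fintype (n i)]
    (J : Ideal (∀ i, Matrix (n i) (n i) R)) :
    ∑ i, Fintype.card (n i) * finrank R (rowSpace J i) = finrank R (J.restrictScalars R) := by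
  simp [← (piRowSpaceEquiv J).finrank_eq, finrank_pi_fintype]

end PiMatrix

/-- Wedderburn's theorem over `F`, extended to `C`: over `C` the group algebra is a product of
matrix algebras, by an isomorphism that identifies the matrix units with elements of `F[G]`. -/
theorem exists_algEquiv_pi_matrix_coeff_mem {C G : Type*} [Field C] [Group G] [Finite G]
    [NeZero (Nat.card G : C)] (F : Subfield C) [IsAlgClosed F] :
    ∃ (r : ℕ) (d : Fin r → ℕ) (Ψ : C[G] ≃ₐ[C] ∀ i, Matrix (Fin (d i)) (Fin (d i)) C),
      ∀ i a b g, (Ψ.symm (Pi.single i (single a b 1))).coeff g ∈ F := by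
  have : NeZero (Nat.card G : F) :=
    ⟨fun h ↦ NeZero.ne (Nat.card G : C) (by simpa using congrArg F.subtype h)⟩
  obtain ⟨r, d, -, ⟨Φ⟩⟩ := IsSemisimpleRing.exists_algEquiv_pi_matrix_of_isAlgClosed F F[G]
  let ψ : F[G] →ₐ[F] ∀ i, Matrix (Fin (d i)) (Fin (d i)) C :=
    (AlgHom.pi fun i ↦ (Algebra.ofId F C).mapMatrix.comp (Pi.evalAlgHom F _ i)).comp Φ.toAlgHom
  let Ψ : C[G] →ₐ[C] ∀ i, Matrix (Fin (d i)) (Fin (d i)) C :=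
    MonoidAlgebra.lift C _ G (ψ.toMonoidHom.comp (MonoidAlgebra.of F G))
  have Ψ_map (x : F[G]) : Ψ (MonoidAlgebra.mapRingHom G (algebraMap F C) x) = ψ x := by
    rw [MonoidAlgebra.lift_mapRingHom_algebraMap]
    exact DFunLike.congr_fun ((MonoidAlgebra.lift F _ G).apply_symm_apply ψ) x
  have Ψ_unit (i a b) : Ψ (MonoidAlgebra.mapRingHom G (algebraMap F C)
      (Φ.symm (Pi.single i (single a b 1)))) = Pi.single i (single a b 1) := by
    rw [Ψ_map]
    ext j p q
    by_cases hj : j = i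
    · subst hj
      simp [ψ, single_apply, apply_ite]
    · simp [ψ, hj]
  have Ψ_surjective : Function.Surjective Ψ := LinearMap.range_eq_top.1 <|
    eq_top_of_single_single_mem (N := Ψ.toLinearMap.range) fun i a b ↦ ⟨_, Ψ_unit i a b⟩
  have finrank_eq : finrank C C[G] = finrank C (∀ i, Matrix (Fin (d i)) (Fin (d i)) C) := by
    have := Φ.toLinearEquiv.finrank_eq
    simp only [finrank_pi_fintype, finrank_matrix, finrank_self,
      finrank_eq_nat_card_basis (MonoidAlgebra.basis G _)] at this ⊢
    exact this
  have Ψ_bijective : Function.Bijective Ψ :=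
    OrzechProperty.bijective_of_surjective_of_finrank_le Ψ.toLinearMap Ψ_surjective finrank_eq.le
  refine ⟨r, d, .ofBijective Ψ Ψ_bijective, fun i a b g ↦ ?_⟩
  rw [(AlgEquiv.symm_apply_eq _).2 (Ψ_unit i a b).symm, MonoidAlgebra.coeff_mapRingHom]
  exact SetLike.coe_mem _

theorem four_mul_mul_sub_le (w d : ℕ) : 4 * (w * (d - w)) ≤ (d * w) ^ 2 := by
  obtain hdw | ⟨e, rfl⟩ := (le_total d w).imp_right Nat.exists_eq_add_of_le
  · simp [Nat.sub_eq_zero_of_le hdw]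
  obtain rfl | hw := Nat.eq_zero_or_pos w
  · simp
  calc 4 * (w * (w + e - w)) = 4 * w * e := by rw [Nat.add_sub_cancel_left]; ring
    _ ≤ (w + e) ^ 2 := four_mul_le_sq_add w e
    _ ≤ ((w + e) * w) ^ 2 := Nat.pow_le_pow_left (Nat.le_mul_of_pos_right _ hw) 2

theorem four_mul_card_biUnion_le {ι α : Type*} [Fintype ι] [DecidableEq α] {S : ι → Finset α}
    {a : ι → ℕ} (hS : ∀ i, 4 * (S i).card ≤ a i ^ 2) :
    4 * (Finset.univ.biUnion S).card ≤ (∑ i, a i) ^ 2 :=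
  calc 4 * (Finset.univ.biUnion S).card ≤ 4 * ∑ i, (S i).card :=
        Nat.mul_le_mul_left 4 Finset.card_biUnion_le
    _ = ∑ i, 4 * (S i).card := Finset.mul_sum _ _ _
    _ ≤ ∑ i, a i ^ 2 := Finset.sum_le_sum fun i _ ↦ hS i
    _ ≤ (∑ i, a i) ^ 2 := Finset.sum_sq_le_sq_sum_of_nonneg fun _ _ ↦ Nat.zero_le _

theorem monoidAlgebra_basis_repr_apply {R M : Type*} [Semiring R] (x : R[M]) (m : M) :
    (MonoidAlgebra.basis M R).repr x m = x.coeff m :=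
  rfl

theorem exists_finset_forall_ideal_isDefinedOver {C G : Type*} [Field C] [Group G] [Finite G]
    [NeZero (Nat.card G : C)] (F : Subfield C) [IsAlgClosed F] (I : Ideal C[G]) :
    ∃ S : Finset C, 4 * S.card ≤ finrank C (I.restrictScalars C) ^ 2 ∧
      ∀ L : Subfield C, F ≤ L → (S : Set C) ⊆ L →
        IsDefinedOver (MonoidAlgebra.basis G C) L (I.restrictScalars C) := by
  classical
  obtain ⟨r, d, Ψ, hΨ⟩ := exists_algEquiv_pi_matrix_coeff_mem (G := G) F
  let J : Ideal (∀ i, Matrix (Fin (d i)) (Fin (d i)) C) := I.comap Ψ.symm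
  have I_eq : I.restrictScalars C = (J.restrictScalars C).map Ψ.symm.toLinearMap := by
    ext x
    refine ⟨fun hx ↦ ⟨Ψ x, by simpa [J] using hx, by simp⟩, ?_⟩
    rintro ⟨A, hA, rfl⟩
    exact hA
  have finrank_I : finrank C (I.restrictScalars C) = ∑ i, d i * finrank C (rowSpace J i) := by
    rw [I_eq, ← AlgEquiv.toLinearEquiv_toLinearMap]
    simpa using (LinearEquiv.finrank_map_eq Ψ.symm.toLinearEquiv (J.restrictScalars C)).trans
      (sum_card_mul_finrank_rowSpace J).symm
  choose S card_S hS using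
    fun i ↦ exists_finset_forall_isDefinedOver (Pi.basisFun C (Fin (d i))) (rowSpace J i)
  simp only [Fintype.card_fin] at card_S
  refine ⟨Finset.univ.biUnion S, ?_, fun L hF hSL ↦ ?_⟩
  · rw [finrank_I]
    exact four_mul_card_biUnion_le fun i ↦
      (Nat.mul_le_mul_left 4 (card_S i)).trans (four_mul_mul_sub_le _ _)
  · rw [I_eq, restrictScalars_eq_iSup_map_rowSpace]
    simp only [Submodule.map_iSup, ← Submodule.map_comp]
    refine .iSup fun i ↦ .iSup fun a ↦ (hS i L fun x hx ↦ hSL ?_).map _ fun b g ↦ ?_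
    · exact Finset.mem_coe.2 (Finset.mem_biUnion.2 ⟨i, Finset.mem_univ i, hx⟩)
    · simpa [rowSingle_single, monoidAlgebra_basis_repr_apply] using hF (hΨ i a b g)

/-- The representation of `G` on the `K[G]`-module `V` is realizable over the subfield `L` of `K`:
with respect to some `K`-basis of `V`, every group element acts by a matrix with entries in `L`. -/
def IsRealizableOver {K : Type*} [Field K] (L : Subfield K) (G V : Type*) [Monoid G]
    [AddCommGroup V] [Module K V] [Module K[G] V] : Prop :=
  ∃ b : Basis (Fin (finrank K V)) K V, ∀ g i j, b.repr (MonoidAlgebra.of K G g • b j) i ∈ L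

namespace IsRealizableOver

variable {K G V V' : Type*} [Field K] {L : Subfield K} [Monoid G]
  [AddCommGroup V] [Module K V] [Module K[G] V]
  [AddCommGroup V'] [Module K V'] [Module K[G] V']

theorem of_basis {κ : Type*} [Finite κ] (b : Basis κ K V)
    (hb : ∀ g i j, b.repr (MonoidAlgebra.of K G g • b j) i ∈ L) : IsRealizableOver L G V := by
  have := Fintype.ofFinite κ
  refine ⟨b.reindex (Fintype.equivFinOfCardEq (finrank_eq_card_basis b).symm), fun g i j ↦ ?_⟩
  simpa using hb g _ _

theorem congr [IsScalarTower K K[G] V] [IsScalarTower K K[G] V'] (e : V ≃ₗ[K[G]] V')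
    (h : IsRealizableOver L G V) : IsRealizableOver L G V' := by
  obtain ⟨b, hb⟩ := h
  refine of_basis (b.map (e.restrictScalars K)) fun g i j ↦ ?_
  simpa [← map_smul] using hb g i j

theorem pi {κ : Type*} [Finite κ] {V : κ → Type*} [∀ c, AddCommGroup (V c)]
    [∀ c, Module K (V c)] [∀ c, Module K[G] (V c)] (h : ∀ c, IsRealizableOver L G (V c)) :
    IsRealizableOver L G (∀ c, V c) := by
  classical
  have := Fintype.ofFinite κ
  choose b hb using h
  refine of_basis (Pi.basis b) fun g ⟨c, i⟩ ⟨c', j⟩ ↦ ?_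
  rw [Pi.basis_repr, Pi.basis_apply, ← Pi.single_smul]
  obtain rfl | hc := eq_or_ne c c'
  · simpa using hb c g i j
  · simp [Pi.single_eq_of_ne hc, L.zero_mem]

end IsRealizableOver

section Ideal

variable {K C G : Type*} [Field K] [Field C] [Algebra K C] [Group G]

theorem restrictScalars_map_mapAlgHom (I : Ideal K[G]) :
    (I.map (MonoidAlgebra.mapAlgHom G (Algebra.ofId K C))).restrictScalars C =
      Submodule.span C (MonoidAlgebra.mapAlgHom G (Algebra.ofId K C) '' I) := by
  set W := Submodule.span C (MonoidAlgebra.mapAlgHom G (Algebra.ofId K C) '' (I : Set K[G]))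
  apply le_antisymm
  · have smul_mem (g : G) (x : C[G]) (hx : x ∈ W) : MonoidAlgebra.of C G g • x ∈ W := by
      induction hx using Submodule.span_induction with
      | mem x hx =>
        obtain ⟨y, hy, rfl⟩ := hx
        exact Submodule.subset_span ⟨MonoidAlgebra.of K G g * y, I.mul_mem_left _ hy, by simp⟩
      | zero => simp
      | add x y _ _ hx hy => exact smul_add (MonoidAlgebra.of C G g) x y ▸ W.add_mem hx hy
      | smul c x _ hx => exact smul_comm (MonoidAlgebra.of C G g) c x ▸ W.smul_mem c hx
    exact Ideal.map_le_of_le_comap (K := MonoidAlgebra.submoduleOfSMulMem W smul_mem)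
      fun x hx ↦ Submodule.subset_span ⟨x, hx, rfl⟩
  · rw [Submodule.span_le]
    rintro _ ⟨x, hx, rfl⟩
    exact Ideal.mem_map_of_mem _ hx

theorem exists_finset_forall_ideal_isRealizableOver [Finite G] [NeZero (Nat.card G : C)]
    (F : Subfield C) [IsAlgClosed F] (I : Ideal K[G]) :
    ∃ S : Finset C, 4 * S.card ≤ finrank K I ^ 2 ∧ ∀ L : Subfield C, F ≤ L → (S : Set C) ⊆ L →
      IsRealizableOver (L.comap (algebraMap K C)) G I := by
  let f := MonoidAlgebra.mapAlgHom G (Algebra.ofId K C)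
  have hf (x : K[G]) (g : G) : (MonoidAlgebra.basis G C).repr (f x) g =
      algebraMap K C ((MonoidAlgebra.basis G K).repr x g) := by
    simp [f, monoidAlgebra_basis_repr_apply]
  obtain ⟨S, card_S, hS⟩ := exists_finset_forall_ideal_isDefinedOver F (I.map f)
  rw [restrictScalars_map_mapAlgHom] at card_S
  refine ⟨S, card_S.trans (Nat.pow_le_pow_left
    (finrank_span_image_le f.toLinearMap (I.restrictScalars K)) 2), fun L hF hSL ↦ ?_⟩
  have hL := hS L hF hSL
  rw [restrictScalars_map_mapAlgHom] at hL
  obtain ⟨s, b, hb⟩ : ∃ (s : Set G) (b : Basis s K I),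
      ∀ x c, b.repr x c = (MonoidAlgebra.basis G K).repr (x : K[G]) c :=
    exists_basis_repr_eq_repr (MonoidAlgebra.basis G K) (I.restrictScalars K)
  have repr_mem : ∀ (c : s) (g : G),
      algebraMap K C ((MonoidAlgebra.basis G K).repr (b c : K[G]) g) ∈ L :=
    hL.algebraMap_repr_mem (W := I.restrictScalars K) (f := f.toLinearMap) hf hb
  refine .of_basis b fun g c c' ↦ ?_
  rw [Subfield.mem_comap, hb]
  simpa [monoidAlgebra_basis_repr_apply] using repr_mem c' (g⁻¹ * c)

end Ideal

theorem exists_linearEquiv_pi_ideal (R M : Type*) [Ring R] [IsSemisimpleRing R] [AddCommGroup M]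
    [Module R M] [Module.Finite R M] :
    ∃ (m : ℕ) (I : Fin m → Ideal R), Nonempty (M ≃ₗ[R] ∀ i, I i) := by
  obtain ⟨m, N, e, hN⟩ := IsSemisimpleModule.exists_linearEquiv_fin_dfinsupp R M
  choose I e' using fun i ↦
    IsSemisimpleRing.exists_linearEquiv_ideal_of_isSimpleModule (R := R) (M := N i)
  exact ⟨m, I, ⟨e.trans <| (DFinsupp.linearEquivFunOnFintype (R := R)).trans <|
    LinearEquiv.piCongrRight fun i ↦ (e' i).some⟩⟩

theorem exists_finset_forall_isRealizableOver {K C G : Type*} [Field K] [Field C] [Algebra K C]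
    [Group G] [Finite G] [NeZero (Nat.card G : C)] (F : Subfield C) [IsAlgClosed F]
    (V : Type*) [AddCommGroup V] [Module K V] [Module K[G] V] [IsScalarTower K K[G] V]
    [FiniteDimensional K V] :
    ∃ S : Finset C, 4 * S.card ≤ finrank K V ^ 2 ∧ ∀ L : Subfield C, F ≤ L → (S : Set C) ⊆ L →
      IsRealizableOver (L.comap (algebraMap K C)) G V := by
  classical
  have : NeZero (Nat.card G : K) :=
    ⟨fun h ↦ NeZero.ne (Nat.card G : C) (by simpa using congrArg (algebraMap K C) h)⟩
  have : Module.Finite K[G] V := .of_restrictScalars_finite K K[G] V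
  obtain ⟨m, I, ⟨e⟩⟩ := exists_linearEquiv_pi_ideal K[G] V
  choose S card_S hS using fun i ↦ exists_finset_forall_ideal_isRealizableOver F (I i)
  refine ⟨Finset.univ.biUnion S, ?_, fun L hF hSL ↦ ?_⟩
  · rw [(e.restrictScalars K).finrank_eq, finrank_pi_fintype]
    exact four_mul_card_biUnion_le card_S
  · refine .congr e.symm <| .pi fun i ↦ hS i L hF fun x hx ↦ hSL ?_
    exact Finset.mem_coe.2 (Finset.mem_biUnion.2 ⟨i, Finset.mem_univ i, hx⟩)

section Descent

variable {k K G : Type*} [Field k] [Field K] [Algebra k K] [Group G]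

theorem exists_monoidHom_map_mapMatrix_eq {R S m : Type*} [CommRing R] [CommRing S] [Fintype m]
    [DecidableEq m] {f : R →+* S} (hf : Function.Injective f) (τ : G →* GL m S)
    (hτ : ∀ g i j, τ g i j ∈ f.range) :
    ∃ τ' : G →* GL m R, ∀ g, Units.map f.mapMatrix.toMonoidHom (τ' g) = τ g := by
  have map_injective : Function.Injective (Units.map (f.mapMatrix (m := m)).toMonoidHom) :=
    Units.map_injective (Matrix.map_injective hf)
  have exists_map_eq (g : G) : ∃ A : Matrix m m R, f.mapMatrix A = τ g := by
    choose A hA using hτ g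
    exact ⟨of A, ext hA⟩
  have mem_range (g : G) : τ g ∈ (Units.map (f.mapMatrix (m := m)).toMonoidHom).range := by
    obtain ⟨A, hA⟩ := exists_map_eq g
    obtain ⟨B, hB⟩ := exists_map_eq g⁻¹
    have mul_eq_one : A * B = 1 := Matrix.map_injective hf <| by
      simpa [hA, hB] using map_mul f.mapMatrix A B
    exact ⟨⟨A, B, mul_eq_one, mul_eq_one_comm.1 mul_eq_one⟩, Units.ext hA⟩
  exact ⟨(MonoidHom.ofInjective map_injective).symm.toMonoidHom.comp (τ.codRestrict _ mem_range),
    fun g ↦ MonoidHom.apply_ofInjective_symm map_injective ⟨τ g, mem_range g⟩⟩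

/-- A matrix representation as a linear representation on column vectors. -/
def columnRepresentation {n : ℕ} (ρ : G →* GL (Fin n) K) : Representation K G (Fin n → K) :=
  (toLinAlgEquiv' : Matrix (Fin n) (Fin n) K ≃ₐ[K] _).toMonoidHom.comp ((Units.coeHom _).comp ρ)

theorem descends_of_basis {n : ℕ} {ρ : G →* GL (Fin n) K} {K₀ : IntermediateField k K}
    (b : Basis (Fin n) K (Fin n → K))
    (hb : ∀ g i j, b.repr (columnRepresentation ρ g (b j)) i ∈ K₀) : Descends ρ K₀ := by
  let e := Pi.basisFun K (Fin n)
  let P : GL (Fin n) K :=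
    ⟨e.toMatrix b, b.toMatrix e, e.toMatrix_mul_toMatrix_flip b, b.toMatrix_mul_toMatrix_flip e⟩
  have conj_eq (g : G) : (P⁻¹ * ρ g * P : GL (Fin n) K) =
      LinearMap.toMatrix b b (columnRepresentation ρ g) := by
    rw [← basis_toMatrix_mul_linearMap_toMatrix_mul_basis_toMatrix b e b e,
      LinearMap.toMatrix_eq_toMatrix']
    exact congrArg (b.toMatrix e * · * e.toMatrix b) (LinearMap.toMatrix'_toLin' _).symm
  obtain ⟨ρ', hρ'⟩ := exists_monoidHom_map_mapMatrix_eq (algebraMap K₀ K).injective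
    ((MulAut.conj P⁻¹).toMonoidHom.comp ρ) fun g i j ↦ ⟨⟨_, hb g i j⟩, by
      simp [conj_eq, LinearMap.toMatrix_apply]⟩
  refine ⟨ρ', P, fun g ↦ ?_⟩
  rw [hρ']
  simp [mul_assoc]

theorem IsRealizableOver.descends {n : ℕ} {ρ : G →* GL (Fin n) K} {K₀ : IntermediateField k K}
    (h : IsRealizableOver K₀.toSubfield G (columnRepresentation ρ).asModule) : Descends ρ K₀ := by
  obtain ⟨b, hb⟩ := h
  let e := (columnRepresentation ρ).asModuleEquiv
  have finrank_eq : finrank K (columnRepresentation ρ).asModule = n :=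
    e.finrank_eq.trans (by simp)
  refine descends_of_basis ((b.map e).reindex (finCongr finrank_eq)) fun g i j ↦ ?_
  simpa [e] using hb g ((finCongr finrank_eq).symm i) ((finCongr finrank_eq).symm j)

end Descent

section AlgebraicOver

/-- The elements of `K` that are algebraic over `k(S)`, where `S` is a subset of an extension of
`K`. -/
def algebraicOver (k K : Type*) {C : Type*} [Field k] [Field K] [Field C] [Algebra k K]
    [Algebra k C] [Algebra K C] [IsScalarTower k K C] (S : Set C) : IntermediateField k K :=
  ((algebraicClosure (IntermediateField.adjoin k S) C).restrictScalars k).comap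
    (IsScalarTower.toAlgHom k K C)

variable {k K C : Type*} [Field k] [Field K] [Field C] [Algebra k K] [Algebra k C] [Algebra K C]
  [IsScalarTower k K C]

theorem card_le_card_of_forall_isAlgebraic {ι : Type*} [Fintype ι] {x : ι → C}
    (hx : AlgebraicIndependent k x) {S : Finset C}
    (hS : ∀ i, IsAlgebraic (IntermediateField.adjoin k (S : Set C)) (x i)) :
    Fintype.card ι ≤ S.card := by
  have indep : (AlgebraicIndependent.matroid k C).Indep (Set.range x) := hx.to_subtype_range
  have subset_closure : Set.range x ⊆ (AlgebraicIndependent.matroid k C).closure S := by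
    rw [AlgebraicIndependent.matroid_closure_eq]
    rintro _ ⟨i, rfl⟩
    rw [SetLike.mem_coe, Subalgebra.mem_algebraicClosure]
    exact IntermediateField.isAlgebraic_adjoin_iff.1 (hS i)
  have := (indep.encard_le_eRk_of_subset subset_closure).trans
    ((Matroid.eRk_closure_eq _ _).trans_le (Matroid.eRk_le_encard _ _))
  rw [← Set.image_univ, hx.injective.encard_image] at this
  simpa using this

theorem fourTrdegLE_algebraicOver {S : Finset C} {N : ℕ} (hS : 4 * S.card ≤ N) :
    FourTrdegLE (algebraicOver k K (S : Set C)) N := by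
  intro s hs
  let f := (IsScalarTower.toAlgHom k K C).comp (algebraicOver k K (S : Set C)).val
  have := card_le_card_of_forall_isAlgebraic (hs.map' (f := f) f.injective) (S := S) fun x ↦
    mem_algebraicClosure_iff.1 x.1.2
  rw [Fintype.card_coe] at this
  exact (Nat.mul_le_mul_left 4 this).trans hS

end AlgebraicOver

theorem ed_irreducible_le_general {k K G : Type*} [Field k] [Field K] [Algebra k K] [Group G]
    [Finite G] [NeZero (Nat.card G : k)] {n : ℕ} (ρ : G →* GL (Fin n) K) :
    ∃ K₀ : IntermediateField k K, Descends ρ K₀ ∧ FourTrdegLE K₀ (n ^ 2) := by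
  let C := AlgebraicClosure K
  let F := algebraicClosure k C
  have : IsAlgClosed F := (algebraicClosure.isAlgClosure (F := k) (E := C)).isAlgClosed
  have : NeZero (Nat.card G : C) :=
    ⟨fun h ↦ NeZero.ne (Nat.card G : k) ((algebraMap k C).injective (by simpa using h))⟩
  obtain ⟨S, card_S, hS⟩ := exists_finset_forall_isRealizableOver (K := K) (G := G) F.toSubfield
    (columnRepresentation ρ).asModule
  rw [(columnRepresentation ρ).asModuleEquiv.finrank_eq, finrank_fin_fun] at card_S
  refine ⟨algebraicOver k K (S : Set C), IsRealizableOver.descends ?_,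
    fourTrdegLE_algebraicOver card_S⟩
  let E := IntermediateField.adjoin k (S : Set C)
  refine hS (algebraicClosure E C).toSubfield (fun x hx ↦ ?_) (fun x hx ↦ ?_)
  · have : IsAlgebraic k x := mem_algebraicClosure_iff.1 hx
    exact mem_algebraicClosure_iff.2 (this.tower_top E)
  · exact mem_algebraicClosure_iff.2 <|
      isAlgebraic_algebraMap (⟨x, IntermediateField.subset_adjoin k _ hx⟩ : E)

/-- Let `k` be a field of characteristic `0`, `K/k` a field extension, `G` a finite
group, and `ρ : G → GL_n(K)` a `K`-irreducible representation.  Then `ρ` descends to an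
intermediate field `k ⊆ K₀ ⊆ K` of transcendence degree at most `n²/4` over `k`. -/
theorem ed_irreducible_le {k : Type*} [Field k] [CharZero k]
    {K : Type*} [Field K] [Algebra k K]
    {G : Type*} [Group G] [Finite G] {n : ℕ}
    (ρ : G →* GL (Fin n) K) (hirr : IsIrreducibleRep ρ) :
    ∃ K₀ : IntermediateField k K, Descends ρ K₀ ∧ FourTrdegLE K₀ (n ^ 2) :=
  have : NeZero (Nat.card G : k) := ⟨Nat.cast_ne_zero.2 Nat.card_pos.ne'⟩
  ed_irreducible_le_general ρ
end

section
/- Let p₁, …, p_l be distinct prime numbers, each congruent to 3 modulo 4. For each i let ζ_{p_i} ∈ ℂ be a primitive p_i-th root of unity, and let k = ℚ(ζ_{p₁} + ζ_{p₁}^{-1}, …, ζ_{p_l} + ζ_{p_l}^{-1}) ⊆ ℂ. For each i let A_i be the quaternion algebra ((ζ_{p_i} − ζ_{p_i}^{-1})², −1) over k, i.e., the 4-dimensional k-algebra with generators x, y and relations x² = (ζ_{p_i} − ζ_{p_i}^{-1})², y² = −1, xy = −yx. Then the Brauer classes of A₁, …, A_l are linearly independent over ℤ/2ℤ in the Brauer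 group Br(k); equivalently, for every nonempty subset S ⊆ {1, …, l}, the tensor product ⊗_{i∈S} A_i over k is not Brauer-trivial (not isomorphic to a matrix algebra over k). -/
open scoped Quaternion TensorProduct

/-!
If `i_1, j_1, …, i_n, j_n` generate the algebras `(a_1, b), …, (a_n, b)`, whose second slots agree,
then `X = i_1 ⋯ i_n` anticommutes with every `j_r`, while the products `b⁻¹ j_1 j_r` are commuting
involutions that commute with `X` and `j_1`. When the tensor product acts on a space of dimension
`2 ^ n`, the common fixed space of these involutions is a plane on which `X` and `j_1` represent
`(∏ a_r, b)`. Hence a split tensor product makes `∏ a_r` a value of the form `c ^ 2 - b * d ^ 2`.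

For `b = -1`, taking norms down to `ℚ` shows that the norm of `∏ a_r` is a sum of two rational
squares. The norm of `(ζ - ζ⁻¹) ^ 2` from a field of odd degree is, up to sign, an odd power of `p`,
so the two squares theorem forbids this for distinct primes congruent to 3 modulo 4. The field `k`
has odd degree because it is a compositum of Galois extensions of odd degrees `(p - 1) / 2`.
-/

section Involutions

open Module End

variable {k V : Type*} [Field k] [AddCommGroup V] [Module k V]

lemma isCompl_eigenspace_one_eigenspace_neg_one (h2 : (2 : k) ≠ 0) {z : End k V}
    (hz : Function.Involutive z) : IsCompl (z.eigenspace 1) (z.eigenspace (-1)) := by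
  have hne : (1 : k) ≠ -1 := fun h => h2 (by linear_combination h)
  refine ⟨z.eigenspaces_iSupIndep.pairwiseDisjoint hne, codisjoint_iff_le_sup.2 fun v _ => ?_⟩
  have hv : v = (2 : k)⁻¹ • (v + z v) + (2 : k)⁻¹ • (v - z v) := by
    match_scalars <;> field_simp <;> ring
  rw [hv]
  refine Submodule.add_mem_sup (Submodule.smul_mem _ _ ?_) (Submodule.smul_mem _ _ ?_) <;>
    rw [mem_eigenspace_iff]
  · simp [hz v, add_comm]
  · simp [hz v]

lemma apply_mem_inf_eigenspace {κ : Type*} {z : κ → End k V} {f : End k V} {T : Finset κ}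
    (hf : ∀ i ∈ T, Commute (z i) f) (μ : k) :
    ∀ v ∈ T.inf fun i => (z i).eigenspace μ, f v ∈ T.inf fun i => (z i).eigenspace μ := by
  simp only [Submodule.mem_finsetInf]
  exact fun v hv i hi => mapsTo_genEigenspace_of_comm (hf i hi) μ 1 (hv i hi)

variable [FiniteDimensional k V]

lemma finrank_eigenspace_one_mul_two (h2 : (2 : k) ≠ 0) {z x : End k V}
    (hz : Function.Involutive z) (hx : Function.Injective x) (hzx : ∀ v, z (x v) = -x (z v)) :
    finrank k (z.eigenspace 1) * 2 = finrank k V := by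
  have hle {μ ν : k} (hμν : ν = -μ) :
      finrank k (z.eigenspace μ) ≤ finrank k (z.eigenspace ν) := by
    have hmap : (z.eigenspace μ).map x ≤ z.eigenspace ν := by
      rintro _ ⟨v, hv, rfl⟩
      rw [mem_eigenspace_iff, hzx, mem_eigenspace_iff.1 hv, map_smul, hμν, neg_smul]
    calc finrank k (z.eigenspace μ) = finrank k ((z.eigenspace μ).map x) :=
          (Submodule.equivMapOfInjective x hx _).finrank_eq
      _ ≤ finrank k (z.eigenspace ν) := Submodule.finrank_mono hmap
  have heq : finrank k (z.eigenspace (-1)) = finrank k (z.eigenspace 1) :=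
    le_antisymm (hle (neg_neg 1).symm) (hle rfl)
  rw [← Submodule.finrank_add_eq_of_isCompl (isCompl_eigenspace_one_eigenspace_neg_one h2 hz), heq,
    mul_two]

lemma finrank_inf_eigenspace_one_mul_two (h2 : (2 : k) ≠ 0) {z x : End k V}
    (hz : Function.Involutive z) (hx : Function.Injective x) (hzx : ∀ v, z (x v) = -x (z v))
    {W : Submodule k V} (hzW : ∀ v ∈ W, z v ∈ W) (hxW : ∀ v ∈ W, x v ∈ W) :
    finrank k (W ⊓ z.eigenspace 1 : Submodule k V) * 2 = finrank k W := by
  have hmap : (eigenspace (z.restrict hzW) 1).map W.subtype = W ⊓ z.eigenspace 1 := by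
    ext v
    simp [Subtype.ext_iff, and_comm]
  rw [← hmap, Submodule.finrank_map_subtype_eq]
  exact finrank_eigenspace_one_mul_two h2 (z := z.restrict hzW) (x := x.restrict hxW)
    (fun v => Subtype.ext (hz v)) (fun u v h => Subtype.ext (hx (congrArg Subtype.val h)))
    (fun v => Subtype.ext (hzx v))

lemma finrank_inf_eigenspace_one_mul_two_pow {κ : Type*} (h2 : (2 : k) ≠ 0) {z x : κ → End k V}
    (hz : ∀ i, Function.Involutive (z i)) (hx : ∀ i, Function.Injective (x i))
    (hzx : ∀ i v, z i (x i v) = -x i (z i v)) (hzz : ∀ i j, Commute (z i) (z j))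
    (hcomm : ∀ i j, i ≠ j → Commute (z i) (x j)) (T : Finset κ) :
    finrank k (T.inf fun i => (z i).eigenspace 1 : Submodule k V) * 2 ^ T.card = finrank k V := by
  classical
  induction T using Finset.induction_on with
  | empty => rw [Finset.inf_empty, Finset.card_empty, pow_zero, mul_one, finrank_top]
  | insert j T hj ih =>
    rw [Finset.inf_insert, inf_comm, Finset.card_insert_of_notMem hj, pow_succ', ← mul_assoc,
      finrank_inf_eigenspace_one_mul_two h2 (hz j) (hx j) (hzx j), ih]
    · exact apply_mem_inf_eigenspace (fun i _ => hzz i j) 1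
    · exact apply_mem_inf_eigenspace (fun i hi => hcomm i j (ne_of_mem_of_not_mem hi hj)) 1

lemma exists_eq_sq_sub_mul_sq_of_finrank_eq_two (h2 : (2 : k) ≠ 0) (hV : finrank k V = 2)
    {A b : k} (hb : b ≠ 0) {X y : End k V} (hX : ∀ v, X (X v) = A • v) (hy : ∀ v, y (y v) = b • v)
    (hXy : ∀ v, X (y v) = -y (X v)) : ∃ c d : k, A = c ^ 2 - b * d ^ 2 := by
  by_cases hsq : ∃ r, b = r ^ 2
  · obtain ⟨r, rfl⟩ := hsq
    have hr : r ≠ 0 := by simpa using hb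
    exact ⟨(A + 1) / 2, (A - 1) / (2 * r), by field_simp; ring⟩
  · obtain ⟨v, hv⟩ := finrank_pos_iff_exists_ne_zero.1 (hV.symm ▸ two_pos)
    have hind : LinearIndependent k ![v, y v] := by
      rw [LinearIndependent.pair_iff' hv]
      intro r hr
      refine hsq ⟨r, smul_left_injective k hv ?_⟩
      simp only [← hy, ← hr, map_smul, smul_smul, sq]
    have hspan : X v ∈ Submodule.span k {v, y v} := by
      have h := hind.span_eq_top_of_card_eq_finrank (by simp [hV])
      rw [Matrix.range_cons_cons_empty] at h
      exact h ▸ Submodule.mem_top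
    obtain ⟨c, d, hcd⟩ := Submodule.mem_span_pair.1 hspan
    refine ⟨c, d, smul_left_injective k hv ?_⟩
    calc A • v = X (c • v + d • y v) := by rw [hcd, hX]
      _ = c • X v - d • y (X v) := by
        rw [map_add, map_smul, map_smul, hXy, smul_neg, sub_eq_add_neg]
      _ = (c ^ 2 - b * d ^ 2) • v := by
        rw [← hcd, map_add, map_smul, map_smul, hy]
        module

lemma exists_eq_sq_sub_mul_sq_of_anticommute {ι : Type*} [Fintype ι] (h2 : (2 : k) ≠ 0)
    {x y : ι → End k V} {X : End k V} {A b : k} (hb : b ≠ 0)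
    (hV : finrank k V = 2 ^ Fintype.card ι)
    (hx : ∀ i, Function.Injective (x i)) (hy : ∀ i, y i * y i = b • 1)
    (hxy : ∀ i, y i * x i = -(x i * y i)) (hyy : ∀ i j, Commute (y i) (y j))
    (hcomm : ∀ i j, i ≠ j → Commute (x i) (y j))
    (hX : X * X = A • 1) (hXy : ∀ i, X * y i = -(y i * X)) (i₀ : ι) :
    ∃ c d : k, A = c ^ 2 - b * d ^ 2 := by
  classical
  let z (j : {j // j ≠ i₀}) : End k V := b⁻¹ • (y i₀ * y j)
  have hzz (j) : z j * z j = 1 := by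
    simp only [z, smul_mul_smul_comm, (hyy _ _).mul_mul_mul_comm, hy]
    rw [smul_smul, mul_mul_mul_comm, inv_mul_cancel₀ hb, one_mul, one_smul, one_mul]
  have hzx (j) : z j * x j = -(x j * z j) := by
    simp only [z, smul_mul_assoc, mul_smul_comm, mul_assoc, hxy, mul_neg, smul_neg]
    rw [← mul_assoc (y i₀), ← mul_assoc (x j), (hcomm _ _ j.2).eq]
  have hzy (j i) : Commute (z j) (y i) := ((hyy _ _).mul_left (hyy _ _)).smul_left _
  have hzX (j) : Commute (z j) X := by
    refine Commute.smul_left (Commute.symm ?_) _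
    rw [Commute, SemiconjBy, ← mul_assoc, hXy, neg_mul, mul_assoc, hXy, mul_neg, neg_neg, mul_assoc]
  have hzcomm (i j : {j // j ≠ i₀}) (hij : i ≠ j) : Commute (z i) (x j) :=
    (((hcomm _ _ j.2).symm).mul_left (hcomm _ _ (Subtype.coe_ne_coe.2 hij.symm)).symm).smul_left _
  set W : Submodule k V := Finset.univ.inf fun j => (z j).eigenspace 1
  have hW : finrank k W = 2 := by
    have h := finrank_inf_eigenspace_one_mul_two_pow h2 (fun j v => LinearMap.congr_fun (hzz j) v)
      (fun j => hx j) (fun j v => LinearMap.congr_fun (hzx j) v)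
      (fun i j => ((hzy i _).mul_right (hzy i _)).smul_right _) hzcomm Finset.univ
    rw [hV, Finset.card_univ, Fintype.card_subtype_compl, Fintype.card_subtype_eq,
      ← Nat.sub_add_cancel (Fintype.card_pos_iff.2 ⟨i₀⟩), pow_succ'] at h
    exact Nat.eq_of_mul_eq_mul_right (by positivity) h
  have hXW : ∀ v ∈ W, X v ∈ W := apply_mem_inf_eigenspace (fun j _ => hzX j) 1
  have hyW : ∀ v ∈ W, y i₀ v ∈ W := apply_mem_inf_eigenspace (fun j _ => hzy j i₀) 1
  exact exists_eq_sq_sub_mul_sq_of_finrank_eq_two h2 hW hb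
    (X := X.restrict hXW) (y := (y i₀).restrict hyW)
    (fun v => Subtype.ext (LinearMap.congr_fun hX v))
    (fun v => Subtype.ext (LinearMap.congr_fun (hy i₀) v))
    (fun v => Subtype.ext (LinearMap.congr_fun (hXy i₀) v))

end Involutions

section PiTensorProduct

variable {ι R : Type*} {A : ι → Type*} [CommRing R] [∀ i, Ring (A i)]
  [∀ i, Algebra R (A i)]

lemma tprod_mul_tprod_eq_prod_smul_one [Fintype ι] {x y : ∀ i, A i} {c : ι → R}
    (h : ∀ i, x i * y i = c i • 1) :
    PiTensorProduct.tprod R x * PiTensorProduct.tprod R y = (∏ i, c i) • 1 := by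
  rw [PiTensorProduct.tprod_mul_tprod, show x * y = fun i => c i • 1 from funext h,
    MultilinearMap.map_smul_univ]
  rfl

variable [DecidableEq ι]

lemma tprod_mul_singleAlgHom_eq_neg {x : ∀ i, A i} {j : ι} {u : A j} (h : x j * u = -(u * x j)) :
    PiTensorProduct.tprod R x * PiTensorProduct.singleAlgHom j u =
      -(PiTensorProduct.singleAlgHom j u * PiTensorProduct.tprod R x) := by
  have hleft : x * Pi.mulSingle j u = Function.update x j (x j * u) := by
    simpa only [Pi.mulSingle, mul_one, Function.update_eq_self] using
      (Function.update_mul x 1 j (x j) u).symm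
  have hright : Pi.mulSingle j u * x = Function.update x j (u * x j) := by
    simpa only [Pi.mulSingle, one_mul, Function.update_eq_self] using
      (Function.update_mul 1 x j u (x j)).symm
  rw [PiTensorProduct.singleAlgHom_apply, PiTensorProduct.tprod_mul_tprod,
    PiTensorProduct.tprod_mul_tprod, MonoidHom.mulSingle_apply, hleft, hright, h,
    MultilinearMap.map_update_neg]

lemma commute_singleAlgHom {i j : ι} (hij : i ≠ j) (u : A i) (v : A j) :
    Commute (PiTensorProduct.singleAlgHom (R := R) i u) (PiTensorProduct.singleAlgHom j v) := by
  simp only [PiTensorProduct.singleAlgHom_apply]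
  exact Commute.tprod (Pi.mulSingle_commute hij u v)

end PiTensorProduct

section QuaternionTensor

open Module

variable {k ι : Type*} [Field k] [Fintype ι] {a : ι → k} {b : k}

lemma finrank_piTensorProduct_quaternionAlgebra :
    finrank k (⨂[k] i, ℍ[k, a i, b]) = (2 ^ Fintype.card ι) ^ 2 := by
  classical
  rw [finrank_eq_card_basis
    (Basis.piTensorProduct fun i => QuaternionAlgebra.basisOneIJK (a i) 0 b), Fintype.card_pi,
    ← pow_mul, mul_comm, pow_mul]
  simp

lemma exists_prod_eq_sq_sub_mul_sq_of_algHom_end [Nonempty ι] (h2 : (2 : k) ≠ 0) (hb : b ≠ 0)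
    (ha : ∀ i, a i ≠ 0) {V : Type*} [AddCommGroup V] [Module k V] [FiniteDimensional k V]
    (hV : finrank k V = 2 ^ Fintype.card ι) (f : (⨂[k] i, ℍ[k, a i, b]) →ₐ[k] End k V) :
    ∃ c d : k, ∏ i, a i = c ^ 2 - b * d ^ 2 := by
  classical
  let q (i : ι) : QuaternionAlgebra.Basis ℍ[k, a i, b] (a i) 0 b := .self k
  let g (i : ι) : ℍ[k, a i, b] →ₐ[k] End k V :=
    f.comp (PiTensorProduct.singleAlgHom (A := fun i => ℍ[k, a i, b]) i)
  have hg {i j : ι} (hij : i ≠ j) (u v) : Commute (g i u) (g j v) :=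
    (commute_singleAlgHom hij u v).map f
  have hii (i) : g i (q i).i * g i (q i).i = a i • 1 := by
    rw [← map_mul, (q i).i_mul_i, zero_smul, add_zero, map_smul, map_one]
  refine exists_eq_sq_sub_mul_sq_of_anticommute h2 (x := fun i => g i (q i).i)
    (y := fun i => g i (q i).j) (X := f (PiTensorProduct.tprod k fun i => (q i).i)) hb hV
    (fun i u v huv => smul_right_injective V (ha i) ?_) (fun i => ?_) (fun i => ?_)
    (fun i j => ?_) (fun i j hij => hg hij _ _) ?_ (fun i => ?_) (Classical.arbitrary ι)
  · simpa using (LinearMap.congr_fun (hii i) u).symm.trans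
      ((congrArg _ huv).trans (LinearMap.congr_fun (hii i) v))
  · rw [← map_mul, (q i).j_mul_j, map_smul, map_one]
  · rw [← map_mul, ← map_mul, (q i).j_mul_i, (q i).i_mul_j, zero_smul, zero_sub, map_neg]
  · obtain rfl | hij := eq_or_ne i j
    · exact Commute.refl _
    · exact hg hij _ _
  · rw [← map_mul, tprod_mul_tprod_eq_prod_smul_one, map_smul, map_one]
    intro i
    rw [(q i).i_mul_i, zero_smul, add_zero]
  · simp only [g, AlgHom.comp_apply]
    rw [← map_mul, tprod_mul_singleAlgHom_eq_neg, map_neg, map_mul]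
    rw [(q i).j_mul_i, (q i).i_mul_j, zero_smul, zero_sub, neg_neg]

theorem exists_prod_eq_sq_sub_mul_sq_of_algEquiv_matrix (h2 : (2 : k) ≠ 0) (hb : b ≠ 0) {m : ℕ}
    (e : (⨂[k] i, ℍ[k, a i, b]) ≃ₐ[k] Matrix (Fin m) (Fin m) k) :
    ∃ c d : k, ∏ i, a i = c ^ 2 - b * d ^ 2 := by
  by_cases ha : ∀ i, a i ≠ 0
  · cases isEmpty_or_nonempty ι
    · exact ⟨1, 0, by simp⟩
    · have hm : m = 2 ^ Fintype.card ι := by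
        have h := e.toLinearEquiv.finrank_eq
        rw [finrank_piTensorProduct_quaternionAlgebra, finrank_matrix, finrank_self,
          Fintype.card_fin, mul_one, ← sq] at h
        exact (Nat.pow_left_injective two_ne_zero h).symm
      exact exists_prod_eq_sq_sub_mul_sq_of_algHom_end h2 hb ha (V := Fin m → k) (by simp [hm])
        (Matrix.toLinAlgEquiv'.toAlgHom.comp e.toAlgHom)
  · obtain ⟨i, hi⟩ := not_forall_not.1 ha
    exact ⟨0, 0, by simpa using Finset.prod_eq_zero (Finset.mem_univ i) hi⟩

end QuaternionTensor

section NormForm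

lemma exists_det_eq_sq_sub_mul_sq {R n : Type*} [CommRing R] [Fintype n] [DecidableEq n] (b : R)
    {A B : Matrix n n R} (hAB : Commute A B) :
    ∃ u v : R, (A * A - b • (B * B)).det = u ^ 2 - b * v ^ 2 := by
  let φ : R →+* QuadraticAlgebra R b 0 := algebraMap R _
  let ω : QuadraticAlgebra R b 0 := QuadraticAlgebra.omega
  let C := A.map φ + ω • B.map φ
  let D := A.map φ - ω • B.map φ
  have hω : starRingEnd _ ω = -ω := by ext <;> simp [ω, starRingEnd_apply]
  have hφ (r : R) : starRingEnd _ (φ r) = φ r := by ext <;> simp [φ, starRingEnd_apply]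
  have hωω : ω * ω = φ b := by ext <;> simp [ω, φ]
  have hD : D.det = star C.det := by
    rw [← starRingEnd_apply, RingHom.map_det]
    congr 1
    ext1 i j
    simp [C, D, hφ, hω, sub_eq_add_neg]
  have hCD : C * D = (A * A - b • (B * B)).map φ := by
    have hcomm : A.map φ * B.map φ = B.map φ * A.map φ := by
      rw [← Matrix.map_mul, hAB.eq, Matrix.map_mul]
    rw [Matrix.map_sub φ (map_sub φ), Matrix.map_smul' φ b (B * B) (map_mul φ),
      Matrix.map_mul, Matrix.map_mul, ← hωω]
    simp only [C, D, add_mul, mul_sub, Matrix.mul_smul, Matrix.smul_mul, hcomm, mul_smul]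
    abel
  refine ⟨C.det.re, C.det.im, (QuadraticAlgebra.algebraMap_injective : Function.Injective φ) ?_⟩
  calc φ (A * A - b • (B * B)).det = (C * D).det := (RingHom.map_det φ _).trans (by rw [hCD]; rfl)
    _ = C.det * star C.det := by rw [Matrix.det_mul, hD]
    _ = φ (C.det.re ^ 2 - b * C.det.im ^ 2) := by
      rw [← QuadraticAlgebra.algebraMap_norm_eq_mul_star, QuadraticAlgebra.norm_def]
      congr 1
      ring

lemma exists_norm_eq_sq_sub_mul_sq {R S : Type*} [CommRing R] [CommRing S] [Algebra R S]
    [Module.Free R S] [Module.Finite R S] (b : R) (c d : S) :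
    ∃ u v : R, Algebra.norm R (c ^ 2 - algebraMap R S b * d ^ 2) = u ^ 2 - b * v ^ 2 := by
  classical
  let β := Module.Free.chooseBasis R S
  obtain ⟨u, v, h⟩ := exists_det_eq_sq_sub_mul_sq b
    ((Commute.all c d).map (Algebra.leftMulMatrix β))
  refine ⟨u, v, ?_⟩
  rw [← h, Algebra.norm_eq_matrix_det β, ← map_mul, ← map_mul, ← map_smul, ← map_sub,
    Algebra.smul_def, sq, sq]

end NormForm

section SumTwoSquares

lemma even_padicValNat_of_eq_sq_add_sq {q n : ℕ} (hq : q.Prime) (hq3 : q % 4 = 3) {u v : ℚ}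
    (h : (n : ℚ) = u ^ 2 + v ^ 2) : Even (padicValNat q n) := by
  have : Fact q.Prime := ⟨hq⟩
  obtain rfl | hn := eq_or_ne n 0
  · simp
  have hden : u.den * v.den ≠ 0 := mul_ne_zero u.den_nz v.den_nz
  have hnat : n * (u.den * v.den) ^ 2 =
      (u.num.natAbs * v.den) ^ 2 + (v.num.natAbs * u.den) ^ 2 := by
    have hrat : (n : ℚ) * (u.den * v.den) ^ 2 = (u.num * v.den) ^ 2 + (v.num * u.den) ^ 2 := by
      rw [h, ← Rat.mul_den_eq_num u, ← Rat.mul_den_eq_num v]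
      ring
    zify
    simp only [mul_pow, sq_abs]
    simp only [mul_pow] at hrat
    exact_mod_cast hrat
  by_cases hqn : q ∣ n
  · have hmem : q ∈ (n * (u.den * v.den) ^ 2).primeFactors :=
      hq.mem_primeFactors (hqn.mul_right _) (mul_ne_zero hn (pow_ne_zero _ hden))
    have heven := Nat.eq_sq_add_sq_iff.1 ⟨_, _, hnat⟩ (q := q) hmem hq3
    rw [padicValNat.mul hn (pow_ne_zero _ hden), padicValNat.pow] at heven
    exact (Nat.even_add.1 heven).2 (even_two_mul _)
  · simp [padicValNat.eq_zero_of_not_dvd hqn]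

lemma prod_prime_pow_odd_ne_sq_add_sq {ι : Type*} {S : Finset ι} (hS : S.Nonempty) {p e : ι → ℕ}
    (hp : ∀ i, (p i).Prime) (hp3 : ∀ i, p i % 4 = 3) (hinj : Function.Injective p)
    (he : ∀ i, Odd (e i)) (u v : ℚ) : ∏ i ∈ S, (p i : ℚ) ^ e i ≠ u ^ 2 + v ^ 2 := by
  intro h
  obtain ⟨j, hj⟩ := hS
  have hval : (∏ i ∈ S, p i ^ e i).factorization (p j) = e j := by
    rw [Nat.factorization_prod fun i _ => pow_ne_zero _ (hp i).ne_zero, Finsupp.finsetSum_apply,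
      Finset.sum_eq_single_of_mem j hj fun i _ hij => ?_]
    · simp [(hp j).factorization_pow]
    · simp [(hp i).factorization_pow, hinj.ne hij]
  refine Nat.not_even_iff_odd.2 (he j) ?_
  rw [← hval, Nat.factorization_def _ (hp j)]
  exact even_padicValNat_of_eq_sq_add_sq (hp j) (hp3 j) (by exact_mod_cast h)

end SumTwoSquares
section Compositum

open Module IntermediateField

lemma finrank_dvd_prod_finrank_of_iSup_eq_top {F K ι : Type*} [Field F] [Field K] [Algebra F K]
    [Fintype ι] {E : ι → IntermediateField F K} [∀ i, FiniteDimensional F (E i)]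
    [∀ i, IsGalois F (E i)] (hE : ⨆ i, E i = ⊤) : finrank F K ∣ ∏ i, finrank F (E i) := by
  have : FiniteDimensional F K := by
    have : FiniteDimensional F (⊤ : IntermediateField F K) := hE ▸ inferInstance
    exact topEquiv.toLinearEquiv.finiteDimensional
  have : IsGalois F K := by
    have : IsGalois F (⨆ i, E i : IntermediateField F K) := {}
    exact .of_algEquiv ((equivOfEq hE).trans topEquiv)
  let restrict : Gal(K/F) →* ∀ i, Gal(E i/F) :=
    MonoidHom.pi fun i => AlgEquiv.restrictNormalHom (E i)
  have hinj : Function.Injective restrict := by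
    refine (injective_iff_map_eq_one _).2 fun σ hσ => ?_
    have hle : ⨆ i, E i ≤ fixedField (Subgroup.zpowers σ) := by
      refine iSup_le fun i => (IntermediateField.le_iff_le _ _).2 ?_
      rw [Subgroup.zpowers_le, ← restrictNormalHom_ker]
      exact congrFun hσ i
    rwa [hE, IntermediateField.le_iff_le, fixingSubgroup_top, le_bot_iff,
      Subgroup.zpowers_eq_bot] at hle
  simpa only [Nat.card_pi, IsGalois.card_aut_eq_finrank] using Subgroup.card_dvd_of_injective _ hinj

lemma finrank_iSup_dvd_prod_finrank {F L ι : Type*} [Field F] [Field L] [Algebra F L]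
    [Fintype ι] (E : ι → IntermediateField F L) [∀ i, FiniteDimensional F (E i)]
    [∀ i, IsGalois F (E i)] :
    finrank F (⨆ i, E i : IntermediateField F L) ∣ ∏ i, finrank F (E i) := by
  let E' (i) := restrict (le_iSup E i)
  let e (i) : E i ≃ₐ[F] E' i := restrictAlgEquiv (le_iSup E i)
  have hfin (i) : FiniteDimensional F (E' i) := (e i).toLinearEquiv.finiteDimensional
  have hgal (i) : IsGalois F (E' i) := .of_algEquiv (e i)
  have hE' : ⨆ i, E' i = ⊤ := by
    refine lift_injective _ ?_
    rw [lift_top]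
    exact (IntermediateField.map_iSup _ _).trans (iSup_congr fun i => lift_restrict (le_iSup E i))
  simpa only [(e _).toLinearEquiv.finrank_eq] using finrank_dvd_prod_finrank_of_iSup_eq_top hE'

end Compositum

section RealCyclotomic

open Module IntermediateField Polynomial

variable {F K L : Type*} [Field F] [Field K] [Field L] [Algebra F K] [Algebra K L] [Algebra F L]
  [IsScalarTower F K L] {n : ℕ} {z : L}

lemma finrank_adjoin_simple_eq_two {t : K} (hz : z ≠ 0) (ht : algebraMap K L t = z + z⁻¹)
    (hzK : z ∉ (algebraMap K L).range) : finrank K K⟮z⟯ = 2 := by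
  let P : K[X] := X ^ 2 - C t * X + 1
  have hdeg : P.natDegree = 2 := by simp only [P]; compute_degree!
  have hmonic : P.Monic := by simp only [P]; monicity!
  have hroot : aeval z P = 0 := by
    simp only [P, map_add, map_sub, map_mul, map_pow, aeval_X, aeval_C, ht, map_one]
    field_simp
    ring
  have hint : IsIntegral K z := ⟨P, hmonic, hroot⟩
  rw [adjoin.finrank hint]
  exact le_antisymm (hdeg ▸ natDegree_le_of_dvd (minpoly.dvd K z hroot) hmonic.ne_zero)
    ((minpoly.two_le_natDegree_iff hint).2 hzK)

lemma isCyclotomicExtension_adjoin_simple [NeZero n] (hz : IsPrimitiveRoot z n) :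
    IsCyclotomicExtension {n} F F⟮z⟯ := by
  change IsCyclotomicExtension {n} F F⟮z⟯.toSubalgebra
  rw [adjoin_simple_toSubalgebra_of_isAlgebraic
    (hz.isIntegral (NeZero.pos n)).tower_top.isAlgebraic]
  exact hz.adjoin_isCyclotomicExtension F

lemma adjoin_add_inv_le : F⟮z + z⁻¹⟯ ≤ F⟮z⟯ :=
  adjoin_simple_le_iff.2 <|
    add_mem (mem_adjoin_simple_self F z) (inv_mem (mem_adjoin_simple_self F z))

lemma notMem_adjoin_add_inv [NeZero n] (hz : IsPrimitiveRoot z n) (hn : 2 < n)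
    (hirr : Irreducible (cyclotomic n F)) : z ∉ F⟮z + z⁻¹⟯ := by
  intro hmem
  have hint : IsIntegral F z := (hz.isIntegral (NeZero.pos n)).tower_top
  have : NeZero (n : L) := hz.neZero'
  have : NeZero (n : F) := .nat_of_neZero (algebraMap F L)
  have hroot : z⁻¹ ∈ (minpoly F z).aroots L := by
    rw [mem_aroots]
    refine ⟨minpoly.ne_zero hint, ?_⟩
    rw [← hz.minpoly_eq_cyclotomic_of_irreducible hirr,
      hz.inv.minpoly_eq_cyclotomic_of_irreducible hirr]
    exact minpoly.aeval _ _
  obtain ⟨σ, hσz⟩ : ∃ σ : F⟮z⟯ →ₐ[F] L, σ (AdjoinSimple.gen F z) = z⁻¹ :=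
    ⟨_, algHomAdjoinIntegralEquiv_symm_apply_gen F hint ⟨z⁻¹, hroot⟩⟩
  have hσ : σ.comp (inclusion adjoin_add_inv_le) = F⟮z + z⁻¹⟯.val := by
    refine algHom_ext_of_eq_adjoin _ rfl fun x hx => ?_
    obtain rfl := Set.mem_singleton_iff.1 hx
    calc σ (AdjoinSimple.gen F z + (AdjoinSimple.gen F z)⁻¹) = z⁻¹ + z⁻¹⁻¹ := by
          rw [map_add, map_inv₀, hσz]
      _ = z + z⁻¹ := by rw [inv_inv, add_comm]
  have hzinv : z⁻¹ = z := hσz.symm.trans (DFunLike.congr_fun hσ ⟨z, hmem⟩)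
  have hsq : z ^ 2 = 1 := by
    rw [sq]
    nth_rw 1 [← hzinv]
    exact inv_mul_cancel₀ (hz.ne_zero (NeZero.ne n))
  exact hn.not_ge (Nat.le_of_dvd two_pos (hz.dvd_of_pow_eq_one 2 hsq))

lemma finrank_adjoin_add_inv_mul_two [NeZero n] (hz : IsPrimitiveRoot z n) (hn : 2 < n)
    (hirr : Irreducible (cyclotomic n F)) : finrank F F⟮z + z⁻¹⟯ * 2 = n.totient := by
  have htop : F⟮z + z⁻¹⟯⟮z⟯.restrictScalars F = F⟮z⟯ := by
    rw [adjoin_simple_adjoin_simple]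
    refine le_antisymm (adjoin_le_iff.2 ?_) (adjoin.mono _ _ _ (by simp))
    exact Set.insert_subset (adjoin_add_inv_le (F := F) (mem_adjoin_simple_self F _)) (by simp)
  have := isCyclotomicExtension_adjoin_simple (F := F) hz
  rw [← IsCyclotomicExtension.finrank F⟮z⟯ hirr, ← htop,
    ← finrank_adjoin_simple_eq_two (hz.ne_zero (NeZero.ne n)) (AdjoinSimple.algebraMap_gen F _)]
  · exact finrank_mul_finrank F F⟮z + z⁻¹⟯ F⟮z + z⁻¹⟯⟮z⟯
  · rintro ⟨x, hx⟩
    exact notMem_adjoin_add_inv hz hn hirr (hx.subst x.2)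

lemma isGalois_adjoin_add_inv [NeZero n] (hz : IsPrimitiveRoot z n) :
    IsGalois F F⟮z + z⁻¹⟯ := by
  have := isCyclotomicExtension_adjoin_simple (F := F) hz
  have := IsCyclotomicExtension.isAbelianGalois {n} F F⟮z⟯
  have := IsAbelianGalois.of_algHom (inclusion (adjoin_add_inv_le (F := F) (z := z)))
  infer_instance

lemma odd_finrank_adjoin_range_add_inv {ι : Type*} [Finite ι] {p : ι → ℕ}
    (hp : ∀ i, (p i).Prime) (hp3 : ∀ i, p i % 4 = 3) (hirr : ∀ i, Irreducible (cyclotomic (p i) F))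
    {z : ι → L} (hz : ∀ i, IsPrimitiveRoot (z i) (p i)) :
    Odd (finrank F (adjoin F (Set.range fun i => z i + (z i)⁻¹))) := by
  cases nonempty_fintype ι
  have hne (i) : NeZero (p i) := ⟨(hp i).ne_zero⟩
  have hodd (i) : Odd (finrank F F⟮z i + (z i)⁻¹⟯) := by
    have hp3 := hp3 i
    have hrank := finrank_adjoin_add_inv_mul_two (hz i) (by lia) (hirr i)
    rw [Nat.totient_prime (hp i)] at hrank
    grind
  have hfin (i) : FiniteDimensional F F⟮z i + (z i)⁻¹⟯ := .of_finrank_pos (hodd i).pos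
  have hgal (i) : IsGalois F F⟮z i + (z i)⁻¹⟯ := isGalois_adjoin_add_inv (hz i)
  rw [← Set.iUnion_singleton_eq_range, adjoin_iUnion]
  exact (Finset.prod_induction _ Odd (fun _ _ => Odd.mul) odd_one fun i _ => hodd i).of_dvd_nat
    (finrank_iSup_dvd_prod_finrank fun i => F⟮z i + (z i)⁻¹⟯)

end RealCyclotomic

section Norm

open Module IntermediateField Polynomial

variable {F K L : Type*} [Field F] [Field K] [Field L] [Algebra F K] [Algebra K L]

lemma totient_dvd_finrank {n : ℕ} [NeZero n] {z : K} (hz : IsPrimitiveRoot z n)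
    (hirr : Irreducible (cyclotomic n F)) : n.totient ∣ finrank F K := by
  have := isCyclotomicExtension_adjoin_simple (F := F) hz
  rw [← IsCyclotomicExtension.finrank F⟮z⟯ hirr]
  exact ⟨_, (finrank_mul_finrank F F⟮z⟯ K).symm⟩

lemma norm_add_inv_sub_two {p : ℕ} (hp : p.Prime) (hp2 : p ≠ 2)
    (hirr : Irreducible (cyclotomic p F)) {z : K} (hz : IsPrimitiveRoot z p) :
    Algebra.norm F (z + z⁻¹ - 2) = ((p : F) ^ finrank F⟮z⟯ K) ^ 2 := by
  have : Fact p.Prime := ⟨hp⟩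
  have := isCyclotomicExtension_adjoin_simple (F := F) hz
  let g := AdjoinSimple.gen F z
  have hg : IsPrimitiveRoot g p := IsPrimitiveRoot.coe_submonoidClass_iff.1 hz
  have hz0 : z ≠ 0 := hz.ne_zero hp.ne_zero
  have hfactor : z + z⁻¹ - 2 = algebraMap F⟮z⟯ K (g⁻¹ * (g - 1) ^ 2) := by
    simp only [map_mul, map_inv₀, map_pow, map_sub, map_one, g, AdjoinSimple.algebraMap_gen]
    field_simp
    ring
  rw [hfactor, ← Algebra.norm_norm (S := F⟮z⟯), Algebra.norm_algebraMap, map_pow, map_mul,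
    map_pow, hg.inv.norm_eq_one hp2 hirr, hg.norm_sub_one_of_prime_ne_two' hirr hp2, one_mul,
    pow_right_comm]

lemma exists_norm_sub_two_eq_or_eq_neg_prime_pow [Algebra F L] [IsScalarTower F K L]
    {p : ℕ} (hp : p.Prime) (hp2 : p ≠ 2)
    (hirr : Irreducible (cyclotomic p F)) {z : L} (hz : IsPrimitiveRoot z p)
    (hzK : z ∉ (algebraMap K L).range) {t : K} (ht : algebraMap K L t = z + z⁻¹) :
    ∃ e : ℕ, (p - 1) * e = finrank F K * 2 ∧
      (Algebra.norm F (t - 2) = (p : F) ^ e ∨ Algebra.norm F (t - 2) = -(p : F) ^ e) := by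
  have : NeZero p := ⟨hp.ne_zero⟩
  let g := AdjoinSimple.gen K z
  have hg : IsPrimitiveRoot g p := IsPrimitiveRoot.coe_submonoidClass_iff.1 hz
  have htg : algebraMap K K⟮z⟯ (t - 2) = g + g⁻¹ - 2 := by
    rw [map_sub, map_ofNat]
    exact congrArg (· - 2) (Subtype.ext ht)
  have hrank : finrank K K⟮z⟯ = 2 :=
    finrank_adjoin_simple_eq_two (hz.ne_zero hp.ne_zero) ht hzK
  have := isCyclotomicExtension_adjoin_simple (F := F) hg
  refine ⟨finrank F⟮g⟯ K⟮z⟯, ?_, sq_eq_sq_iff_eq_or_eq_neg.1 ?_⟩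
  · rw [← Nat.totient_prime hp, ← IsCyclotomicExtension.finrank F⟮g⟯ hirr, ← hrank,
      finrank_mul_finrank, finrank_mul_finrank]
  · calc Algebra.norm F (t - 2) ^ 2 = Algebra.norm F (algebraMap K K⟮z⟯ (t - 2)) := by
          rw [← Algebra.norm_norm (S := K) (a := algebraMap K K⟮z⟯ (t - 2)),
            Algebra.norm_algebraMap, hrank, map_pow]
      _ = ((p : F) ^ finrank F⟮g⟯ K⟮z⟯) ^ 2 := by rw [htg, norm_add_inv_sub_two hp hp2 hirr hg]

end Norm

section OddDegree

open Module Polynomial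

variable {K L : Type*} [Field K] [Algebra ℚ K] [Field L] [Algebra K L]

lemma exists_odd_abs_norm_eq_prime_pow (hK : Odd (finrank ℚ K)) {p : ℕ} (hp : p.Prime)
    (hp3 : p % 4 = 3) {ζ : L} (hζ : IsPrimitiveRoot ζ p) {a : K}
    (ha : algebraMap K L a = (ζ - ζ⁻¹) ^ 2) :
    ∃ e : ℕ, Odd e ∧ |Algebra.norm ℚ a| = (p : ℚ) ^ e := by
  have : CharZero K := algebraRat.charZero K
  have : CharZero L := charZero_of_injective_algebraMap (algebraMap K L).injective
  have : NeZero p := ⟨hp.ne_zero⟩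
  have hirr := cyclotomic.irreducible_rat hp.pos
  have hp2 : p ≠ 2 := by lia
  have hζ2 : IsPrimitiveRoot (ζ ^ 2) p :=
    hζ.pow_of_coprime 2 ((Nat.coprime_primes Nat.prime_two hp).2 hp2.symm)
  have hζK : ζ ^ 2 ∉ (algebraMap K L).range := by
    rintro ⟨z, hz⟩
    have hdvd := totient_dvd_finrank
      ((IsPrimitiveRoot.map_iff_of_injective (algebraMap K L).injective).1 (hz ▸ hζ2)) hirr
    rw [Nat.totient_prime hp] at hdvd
    have := hK.of_dvd_nat hdvd
    grind
  have ht : algebraMap K L (a + 2) = ζ ^ 2 + (ζ ^ 2)⁻¹ := by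
    have := hζ.ne_zero hp.ne_zero
    rw [map_add, map_ofNat, ha]
    field_simp
    ring
  obtain ⟨e, he, hnorm⟩ := exists_norm_sub_two_eq_or_eq_neg_prime_pow hp hp2 hirr hζ2 hζK ht
  rw [add_sub_cancel_right, ← abs_eq (by positivity)] at hnorm
  refine ⟨e, Nat.not_even_iff_odd.1 fun heven => ?_, hnorm⟩
  have hdvd : 2 * 2 ∣ (p - 1) * e := mul_dvd_mul (by lia) heven.two_dvd
  rw [he] at hdvd
  grind

theorem quaternion_classes_independent_general (hK : Odd (finrank ℚ K)) {ι : Type*} {p : ι → ℕ}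
    (hp : ∀ i, (p i).Prime) (hp3 : ∀ i, p i % 4 = 3) (hinj : Function.Injective p)
    {ζ : ι → L} (hζ : ∀ i, IsPrimitiveRoot (ζ i) (p i)) {a : ι → K}
    (ha : ∀ i, algebraMap K L (a i) = (ζ i - (ζ i)⁻¹) ^ 2) {S : Finset ι} (hS : S.Nonempty) :
    ¬ ∃ m : ℕ, Nonempty
      ((⨂[K] i : {x // x ∈ S}, ℍ[K, a i.1, -1]) ≃ₐ[K] Matrix (Fin m) (Fin m) K) := by
  rintro ⟨m, ⟨f⟩⟩
  have : FiniteDimensional ℚ K := .of_finrank_pos hK.pos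
  have : CharZero K := algebraRat.charZero K
  obtain ⟨c, d, hcd⟩ := exists_prod_eq_sq_sub_mul_sq_of_algEquiv_matrix two_ne_zero
    (neg_ne_zero.2 one_ne_zero) f
  obtain ⟨u, v, huv⟩ := exists_norm_eq_sq_sub_mul_sq (-1 : ℚ) c d
  choose e he hnorm using fun i => exists_odd_abs_norm_eq_prime_pow hK (hp i) (hp3 i) (hζ i) (ha i)
  refine prod_prime_pow_odd_ne_sq_add_sq hS hp hp3 hinj he u v ?_
  calc ∏ i ∈ S, (p i : ℚ) ^ e i = |Algebra.norm ℚ (∏ i : {x // x ∈ S}, a i.1)| := by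
        simp_rw [Finset.prod_coe_sort S a, map_prod, Finset.abs_prod, hnorm]
    _ = |u ^ 2 - -1 * v ^ 2| := by rw [hcd, ← huv, map_neg, map_one]
    _ = u ^ 2 + v ^ 2 := by
      rw [neg_one_mul, sub_neg_eq_add, abs_of_nonneg (by positivity)]

end OddDegree

/-- Let `p₁, …, p_l` be distinct primes, each `≡ 3 (mod 4)`, let `ζ_{p_i} ∈ ℂ` be a
primitive `p_i`-th root of unity, and let `k = ℚ(ζ_{p₁} + ζ_{p₁}⁻¹, …, ζ_{p_l} + ζ_{p_l}⁻¹)`.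
Let `A_i` be the quaternion algebra `((ζ_{p_i} − ζ_{p_i}⁻¹)², −1)` over `k`.  Then the
Brauer classes of `A₁, …, A_l` are linearly independent over `ℤ/2ℤ`: for every nonempty
subset `S` of the indices, the tensor product `⊗_{i ∈ S} A_i` over `k` is not isomorphic
to a matrix algebra over `k`. -/
theorem quaternion_classes_independent
    (l : ℕ) (p : Fin l → ℕ)
    (hp : ∀ i, Nat.Prime (p i)) (hp3 : ∀ i, p i % 4 = 3)
    (hdist : Function.Injective p)
    (ζ : Fin l → ℂ) (hζ : ∀ i, IsPrimitiveRoot (ζ i) (p i))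
    (k : IntermediateField ℚ ℂ)
    (hk : k = IntermediateField.adjoin ℚ (Set.range fun i => ζ i + (ζ i)⁻¹))
    (a : Fin l → k) (ha : ∀ i, (a i : ℂ) = (ζ i - (ζ i)⁻¹) ^ 2) :
    ∀ S : Finset (Fin l), S.Nonempty →
      ¬ ∃ m : ℕ, Nonempty
        ((⨂[k] i : {x // x ∈ S}, ℍ[k, a i.1, -1]) ≃ₐ[k] Matrix (Fin m) (Fin m) k) := by
  have hodd : Odd (Module.finrank ℚ k) := hk ▸ odd_finrank_adjoin_range_add_inv hp hp3
    (fun i => Polynomial.cyclotomic.irreducible_rat (hp i).pos) hζ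
  exact fun S hS => quaternion_classes_independent_general hodd hp hp3 hdist hζ ha hS
end

section
/- Let k be a field of characteristic 0 with algebraic closure k̄, let G be a finite group, and let V and W be finite-dimensional representations of G over k̄ whose characters χ_V and χ_W take all their values in k and which have no common irreducible constituent (equivalently, the standard inner product ⟨χ_V, χ_W⟩ = (1/|G|) Σ_{g∈G} χ_V(g) χ_W(g^{-1}) is 0). Then for every field extension K/k: the class function χ_V + χ_W is the character of a representation of G over K if and only if both χ_V and χ_W are characters of representations of G over K. -/
open Matrix

/-- The character of a matrix representation. -/
noncomputable def repChar {G F : Type*} [Group G] [Field F] {n : ℕ}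
    (ρ : G →* GL (Fin n) F) (g : G) : F :=
  Matrix.trace (ρ g : Matrix (Fin n) (Fin n) F)

/-- A `k`-valued class function `χ` on `G` is the character of a representation of `G`
over a field extension `K` of `k` if there is a finite-dimensional matrix representation
of `G` over `K` whose character is `χ` composed with the inclusion `k ⊆ K`. -/
def IsCharacterOver {k : Type*} [Field k] {G : Type*} [Group G] (χ : G → k)
    (K : Type*) [Field K] [Algebra k K] : Prop :=
  ∃ (m : ℕ) (τ : G →* GL (Fin m) K), ∀ g, repChar τ g = algebraMap k K (χ g)

/-!
Let `χ` and `ψ` be the characters of representations `ρ` and `σ` with `Hom_G(ρ, σ) = 0`, both with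
values in `k`. By Schur averaging, the central element `c = ∑ χ(g⁻¹) g` of `k[G]` acts on `σ` as
zero. As `k[G]` is semisimple, the ideal generated by `c` is generated by a central idempotent `e`,
which therefore kills `σ`. On the other hand the coefficient of `1` in `c a` is `χ(a)`, so that
`c (1 - e) = 0` makes `χ` vanish on `(1 - e) k[G]`. Hence `e`, which is defined over `k`, splits any
representation over `K` with character `χ + ψ` into summands with characters `χ` and `ψ`.
-/

open MonoidAlgebra Representation

section SemisimpleRing

variable {R : Type*} [Ring R] [IsSemisimpleRing R]

theorem exists_isIdempotentElem_mem_center_of_mem_center {c : R} (hc : c ∈ Subring.center R) :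
    ∃ e ∈ Subring.center R, IsIdempotentElem e ∧ c ∣ e ∧ c * e = c := by
  have hcomm (a : R) : c * a = a * c := (Subring.mem_center_iff.1 hc a).symm
  obtain ⟨e, he, hspan⟩ := IsSemisimpleRing.ideal_eq_span_idempotent (Ideal.span {c})
  obtain ⟨y, hy⟩ : ∃ y, y * c = e :=
    Ideal.mem_span_singleton'.1 (hspan ▸ Ideal.mem_span_singleton_self e)
  obtain ⟨x, hx⟩ : ∃ x, x * e = c :=
    Ideal.mem_span_singleton'.1 (hspan ▸ Ideal.mem_span_singleton_self c)
  have hce : c * e = c := by rw [← hx, mul_assoc, he.eq]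
  have hleft (a : R) : e * a * e = e * a :=
    calc e * a * e = y * a * (c * e) := by rw [← hy, mul_assoc y, hcomm a]; simp only [mul_assoc]
      _ = e * a := by rw [hce, mul_assoc, ← hcomm, ← mul_assoc, hy]
  have hright (a : R) : e * a * e = a * e :=
    calc e * a * e = e * c * (a * y) := by rw [mul_assoc e c, hcomm, mul_assoc a, hy, mul_assoc]
      _ = a * e := by rw [← hcomm, hce, hcomm, mul_assoc, hy]
  refine ⟨e, Subring.mem_center_iff.2 fun a => ?_, he, ⟨y, by rw [hcomm, hy]⟩, hce⟩
  rw [← hright, hleft]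

end SemisimpleRing

section GroupAlgebra

variable {k G : Type*} [CommRing k]

/-- The `k`-linear extension of a function on `G` to the group algebra `k[G]`, used to evaluate
characters on elements of the group algebra. -/
noncomputable def linearExtension (χ : G → k) : k[G] →ₗ[k] k :=
  Finsupp.linearCombination k χ ∘ₗ (coeffLinearEquiv k).toLinearMap

theorem linearExtension_single (χ : G → k) (g : G) (r : k) :
    linearExtension χ (single g r) = r * χ g := by
  simp [linearExtension]

theorem linearExtension_add (χ ψ : G → k) :
    linearExtension (fun g => χ g + ψ g) = linearExtension χ + linearExtension ψ := by
  ext g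
  simp [linearExtension_single]

variable [Group G] [Fintype G]

/-- The element `∑ χ(g⁻¹) g` of the group algebra. For an irreducible character `χ` in
characteristic zero it is a scalar multiple of the idempotent of the `χ`-isotypic component. -/
noncomputable def characterElement (χ : G → k) : k[G] :=
  ∑ g, single g (χ g⁻¹)

theorem coeff_characterElement (χ : G → k) (g : G) : (characterElement χ).coeff g = χ g⁻¹ := by
  classical
  simp [characterElement, coeff_sum, coeff_single, Finsupp.single_apply]

theorem coeff_one_characterElement_mul (χ : G → k) (a : k[G]) :
    (characterElement χ * a).coeff 1 = linearExtension χ a := by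
  induction a using MonoidAlgebra.induction_linear with
  | zero => simp
  | add a b ha hb => simp [mul_add, ha, hb]
  | single g r => simp [linearExtension_single, coeff_characterElement, mul_comm]

theorem characterElement_mem_center {χ : G → k} (hχ : ∀ g h, χ (g * h) = χ (h * g)) :
    characterElement χ ∈ Subring.center k[G] := by
  refine Subring.mem_center_iff.2 fun a => ?_
  induction a using MonoidAlgebra.induction_linear with
  | zero => simp
  | add a b ha hb => rw [mul_add, add_mul, ha, hb]
  | single g r =>
    ext x
    simp [coeff_characterElement, hχ g, mul_comm]

end GroupAlgebra

section LinearRepresentation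

variable {R G V W : Type*} [CommRing R] [Group G] [AddCommGroup V] [Module R V]
  [AddCommGroup W] [Module R W]

theorem sum_conj_eq_zero_of_subsingleton_intertwiningMap [Fintype G] (ρ : Representation R G V)
    (σ : Representation R G W) [Subsingleton (IntertwiningMap ρ σ)] (f : V →ₗ[R] W) :
    ∑ g, σ g ∘ₗ f ∘ₗ ρ g⁻¹ = 0 := by
  have hinv : (linHom ρ σ).norm f ∈ (linHom ρ σ).invariants := fun g => self_norm_apply _ g f
  have := (invariantsEquivIntertwiningMap ρ σ).injective.subsingleton
  have hzero : (linHom ρ σ).norm f = 0 :=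
    congrArg Subtype.val (Subsingleton.elim (⟨_, hinv⟩ : (linHom ρ σ).invariants) 0)
  simpa [Representation.norm] using hzero

/-- The subrepresentation on the range of an endomorphism `E` that commutes with `G`; for
idempotent `E` it is the direct summand cut out by `E`. -/
noncomputable def rangeRepresentation (ρ : Representation R G V) {E : Module.End R V}
    (hE : ∀ g, Commute E (ρ g)) : Representation R G (LinearMap.range E) :=
  ρ.subrepresentation (LinearMap.range E) fun g => by
    rintro _ ⟨v, rfl⟩
    exact ⟨ρ g v, LinearMap.congr_fun (hE g) v⟩

end LinearRepresentation

section Character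

variable {F G V W : Type*} [Field F] [Group G] [AddCommGroup V] [Module F V]
  [AddCommGroup W] [Module F W]

theorem sum_character_inv_smul_eq_zero [Fintype G] [FiniteDimensional F V]
    (ρ : Representation F G V) (σ : Representation F G W)
    [Subsingleton (IntertwiningMap ρ σ)] : ∑ g, ρ.character g⁻¹ • σ g = 0 := by
  let b := Module.finBasis F V
  have htrace (g : G) : ρ.character g⁻¹ = ∑ i, b.coord i (ρ g⁻¹ (b i)) := by
    rw [character, LinearMap.trace_eq_matrix_trace F b]
    simp [Matrix.trace, LinearMap.toMatrix_apply]
  ext w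
  calc (∑ g, ρ.character g⁻¹ • σ g) w
      = ∑ i, (∑ g, σ g ∘ₗ (b.coord i).smulRight w ∘ₗ ρ g⁻¹) (b i) := by
        simp only [htrace, LinearMap.sum_apply, LinearMap.smul_apply, Finset.sum_smul,
          LinearMap.comp_apply, LinearMap.smulRight_apply, map_smul]
        exact Finset.sum_comm
    _ = 0 := by simp [sum_conj_eq_zero_of_subsingleton_intertwiningMap]

theorem subsingleton_intertwiningMap_of_sum_character_eq_zero [CharZero F] [Fintype G]
    [FiniteDimensional F V] [FiniteDimensional F W] (ρ : Representation F G V)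
    (σ : Representation F G W) (h : ∑ g, σ.character g * ρ.character g⁻¹ = 0) :
    Subsingleton (IntertwiningMap ρ σ) := by
  have := invertibleOfNonzero (Nat.cast_ne_zero.2 Nat.card_pos.ne' : (Nat.card G : F) ≠ 0)
  have hrank := card_inv_mul_sum_char_mul_char_eq_finrank ρ σ
  rw [h, mul_zero, eq_comm, Nat.cast_eq_zero] at hrank
  exact Module.finrank_zero_iff.1 hrank

theorem character_prod [FiniteDimensional F V] [FiniteDimensional F W]
    (ρ : Representation F G V) (σ : Representation F G W) (g : G) :
    (ρ.prod σ).character g = ρ.character g + σ.character g :=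
  LinearMap.trace_prodMap' (ρ g) (σ g)

theorem character_rangeRepresentation [FiniteDimensional F V] (ρ : Representation F G V)
    {E : Module.End F V} (hE : ∀ g, Commute E (ρ g)) (hidem : IsIdempotentElem E) (g : G) :
    (rangeRepresentation ρ hE).character g = LinearMap.trace F V (E * ρ g) := by
  rw [← LinearMap.trace_restrict_eq_of_forall_mem (LinearMap.range E) (E * ρ g) fun _ => ⟨_, rfl⟩]
  refine congrArg (LinearMap.trace F _) (LinearMap.ext ?_)
  rintro ⟨_, v, rfl⟩
  refine Subtype.ext ?_
  change (ρ g * E) v = (E * (ρ g * E)) v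
  rw [← (hE g).eq, ← mul_assoc, hidem.eq]

end Character

section ScalarExtension

variable {k L G V W : Type*} [Field k] [Field L] [Algebra k L] [Group G]
  [AddCommGroup V] [Module L V] [AddCommGroup W] [Module L W]

variable (k) in
/-- The action of the group algebra `k[G]` on a representation over an extension `L` of `k`. It is
only a ring homomorphism because `V` carries no `k`-module structure of its own. -/
noncomputable def groupAlgebraHom (ρ : Representation L G V) : k[G] →+* Module.End L V :=
  (ρ.asAlgebraHom : L[G] →+* Module.End L V).comp (mapRingHom G (algebraMap k L))

theorem groupAlgebraHom_single (ρ : Representation L G V) (g : G) (r : k) :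
    groupAlgebraHom k ρ (single g r) = algebraMap k L r • ρ g := by
  simp [groupAlgebraHom]

theorem groupAlgebraHom_single_one (ρ : Representation L G V) (g : G) :
    groupAlgebraHom k ρ (single g 1) = ρ g := by
  simp [groupAlgebraHom_single]

theorem trace_groupAlgebraHom {ρ : Representation L G V} {χ : G → k}
    (hχ : ∀ g, ρ.character g = algebraMap k L (χ g)) (a : k[G]) :
    LinearMap.trace L V (groupAlgebraHom k ρ a) = algebraMap k L (linearExtension χ a) := by
  induction a using MonoidAlgebra.induction_linear with
  | zero => simp
  | add a b ha hb => simp only [map_add, ha, hb]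
  | single g r =>
    rw [groupAlgebraHom_single, linearExtension_single, map_smul, map_mul, ← hχ]
    rfl

theorem mul_comm_of_character_eq_algebraMap {ρ : Representation L G V} {χ : G → k}
    (hχ : ∀ g, ρ.character g = algebraMap k L (χ g)) (g h : G) : χ (g * h) = χ (h * g) :=
  (algebraMap k L).injective <| by rw [← hχ, ← hχ, char_mul_comm]

theorem groupAlgebraHom_characterElement_eq_zero [Fintype G] [FiniteDimensional L V]
    {ρ : Representation L G V} (σ : Representation L G W) [Subsingleton (IntertwiningMap ρ σ)]
    {χ : G → k} (hχ : ∀ g, ρ.character g = algebraMap k L (χ g)) :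
    groupAlgebraHom k σ (characterElement χ) = 0 := by
  simp only [characterElement, map_sum, groupAlgebraHom_single, ← hχ]
  exact sum_character_inv_smul_eq_zero ρ σ

theorem exists_separating_central_idempotent [Finite G] [NeZero (Nat.card G : k)]
    [FiniteDimensional L V] {ρ : Representation L G V} {σ : Representation L G W}
    [Subsingleton (IntertwiningMap ρ σ)] {χ ψ : G → k}
    (hχ : ∀ g, ρ.character g = algebraMap k L (χ g))
    (hψ : ∀ g, σ.character g = algebraMap k L (ψ g)) :
    ∃ e ∈ Subring.center k[G], IsIdempotentElem e ∧
      (∀ a, linearExtension χ (e * a) = linearExtension χ a) ∧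
      ∀ a, linearExtension ψ (e * a) = 0 := by
  cases nonempty_fintype G
  obtain ⟨_, hcenter, hidem, ⟨y, rfl⟩, hmul⟩ := exists_isIdempotentElem_mem_center_of_mem_center
    (characterElement_mem_center (mul_comm_of_character_eq_algebraMap hχ))
  refine ⟨_, hcenter, hidem, fun a => ?_, fun a => ?_⟩
  · rw [← coeff_one_characterElement_mul, ← mul_assoc, hmul, coeff_one_characterElement_mul]
  · apply (algebraMap k L).injective
    rw [← trace_groupAlgebraHom hψ]
    simp [groupAlgebraHom_characterElement_eq_zero σ hχ]

end ScalarExtension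

section MatrixRepresentation

variable {F G : Type*} [Field F] [Group G]

/-- The representation on column vectors given by a matrix representation. -/
noncomputable def matrixRepresentation {n : ℕ} (τ : G →* GL (Fin n) F) :
    Representation F G (Fin n → F) :=
  (MonoidHomClass.toMonoidHom Matrix.toLinAlgEquiv').comp ((Units.coeHom _).comp τ)

theorem character_matrixRepresentation {n : ℕ} (τ : G →* GL (Fin n) F) :
    (matrixRepresentation τ).character = repChar τ :=
  funext fun g => Matrix.trace_toLin'_eq (τ g : Matrix (Fin n) (Fin n) F)

theorem exists_repChar_eq_character {V : Type*} [AddCommGroup V] [Module F V]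
    [FiniteDimensional F V] (ρ : Representation F G V) :
    ∃ (n : ℕ) (τ : G →* GL (Fin n) F), repChar τ = ρ.character := by
  let b := Module.finBasis F V
  let τ := (MonoidHomClass.toMonoidHom (LinearMap.toMatrixAlgEquiv b)).comp ρ
  exact ⟨_, τ.toHomUnits, funext fun g => (LinearMap.trace_eq_matrix_trace F b (ρ g)).symm⟩

end MatrixRepresentation

namespace IsCharacterOver

variable {k K G : Type*} [Field k] [Field K] [Algebra k K] [Group G] {χ ψ : G → k}

theorem of_representation {V : Type*} [AddCommGroup V] [Module K V] [FiniteDimensional K V]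
    (ρ : Representation K G V) (hρ : ∀ g, ρ.character g = algebraMap k K (χ g)) :
    IsCharacterOver χ K := by
  obtain ⟨n, τ, hτ⟩ := exists_repChar_eq_character ρ
  exact ⟨n, τ, fun g => by rw [hτ, hρ]⟩

theorem add (hχ : IsCharacterOver χ K) (hψ : IsCharacterOver ψ K) :
    IsCharacterOver (fun g => χ g + ψ g) K := by
  obtain ⟨m, τ, hτ⟩ := hχ
  obtain ⟨n, υ, hυ⟩ := hψ
  refine of_representation ((matrixRepresentation τ).prod (matrixRepresentation υ)) fun g => ?_
  rw [character_prod, character_matrixRepresentation, character_matrixRepresentation, hτ, hυ,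
    map_add]

theorem central_idempotent_mul (hχ : IsCharacterOver χ K) {e : k[G]}
    (hcenter : e ∈ Subring.center k[G]) (hidem : IsIdempotentElem e) :
    IsCharacterOver (fun g => linearExtension χ (e * single g 1)) K := by
  obtain ⟨m, τ, hτ⟩ := hχ
  let ρ := matrixRepresentation τ
  have hρ : ∀ g, ρ.character g = algebraMap k K (χ g) := by
    simpa only [ρ, character_matrixRepresentation] using hτ
  have hcomm (g : G) : Commute (groupAlgebraHom k ρ e) (ρ g) := by
    rw [← groupAlgebraHom_single_one (k := k)]
    exact (show Commute e _ from (Subring.mem_center_iff.1 hcenter _).symm).map _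
  refine of_representation (rangeRepresentation ρ hcomm) fun g => ?_
  rw [character_rangeRepresentation ρ hcomm (hidem.map _),
    ← groupAlgebraHom_single_one (k := k) ρ g, ← map_mul, trace_groupAlgebraHom hρ]

end IsCharacterOver

theorem sum_character_realizable_iff_general {k L K G : Type*} [Field k] [Field L] [Algebra k L]
    [Field K] [Algebra k K] [Group G] [Finite G] [NeZero (Nat.card G : k)] {nV nW : ℕ}
    (ρV : G →* GL (Fin nV) L) (ρW : G →* GL (Fin nW) L) (χV χW : G → k)
    (hV : ∀ g, repChar ρV g = algebraMap k L (χV g))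
    (hW : ∀ g, repChar ρW g = algebraMap k L (χW g))
    (hdisj : Subsingleton
      (IntertwiningMap (matrixRepresentation ρW) (matrixRepresentation ρV))) :
    IsCharacterOver (fun g => χV g + χW g) K ↔ IsCharacterOver χV K ∧ IsCharacterOver χW K := by
  refine ⟨fun h => ?_, fun h => h.1.add h.2⟩
  simp only [← character_matrixRepresentation] at hV hW
  obtain ⟨e, hcenter, hidem, heW, heV⟩ := exists_separating_central_idempotent hW hV
  constructor
  · simpa [linearExtension_add, sub_mul, heV, heW, linearExtension_single] using
      h.central_idempotent_mul (sub_mem (one_mem _) hcenter) hidem.one_sub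
  · simpa [linearExtension_add, heV, heW, linearExtension_single] using
      h.central_idempotent_mul hcenter hidem

/-- Let `k` be a field of characteristic `0` with algebraic closure `k̄`, `G` a finite
group, and `V`, `W` representations of `G` over `k̄` with `k`-valued characters `χ_V`,
`χ_W` which are disjoint (their inner product vanishes).  Then for every field extension
`K/k`, the class function `χ_V + χ_W` is the character of a representation of `G` over
`K` if and only if both `χ_V` and `χ_W` are characters of representations of `G` over
`K`. -/
theorem sum_character_realizable_iff {k : Type*} [Field k] [CharZero k]
    {G : Type*} [Group G] [Fintype G]
    {nV nW : ℕ}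
    (ρV : G →* GL (Fin nV) (AlgebraicClosure k))
    (ρW : G →* GL (Fin nW) (AlgebraicClosure k))
    (χV χW : G → k)
    (hV : ∀ g, repChar ρV g = algebraMap k (AlgebraicClosure k) (χV g))
    (hW : ∀ g, repChar ρW g = algebraMap k (AlgebraicClosure k) (χW g))
    (hdisj : (1 / (Nat.card G : k)) * ∑ g : G, χV g * χW g⁻¹ = 0) :
    ∀ (K : Type*) [Field K] [Algebra k K],
      IsCharacterOver (fun g => χV g + χW g) K ↔
        (IsCharacterOver χV K ∧ IsCharacterOver χW K) := by
  intro K _ _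
  have := charZero_of_injective_algebraMap (algebraMap k (AlgebraicClosure k)).injective
  have hsum : ∑ g, χV g * χW g⁻¹ = 0 := by simpa using hdisj
  refine sum_character_realizable_iff_general ρV ρW χV χW hV hW ?_
  apply subsingleton_intertwiningMap_of_sum_character_eq_zero
  simp only [character_matrixRepresentation, hV, hW, ← map_mul, ← map_sum, hsum, map_zero]
end
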